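/- (Theorem: Initialization I.) Let Y_{(0)} = XA + Z_{(0)} with Z_{(0)} having i.i.d. N(0, (2σ)²) entries and A ∈ Θ(s,r,d,γ), and let q = n ∧ p. Let P = XM⁻X' with M = X'X and M⁻ its Moore–Penrose pseudo-inverse, r̂ = max{j : σ_j(PY_{(0)}) ≥ ση} and let V_{(0)} be the matrix of top-r̂ right singular vectors of PY_{(0)}, where η ≥ 2(1 + √(2 log p/(m+q)))(√m + √q)/ξ for an absolute constant ξ ∈ (0,1]. Suppose log p < (m+q)/2, 2σ(√m + √q) < c_1 d for a sufficiently small constant c_1 > 0, δ_r = σ_r(XA) ≥ (1+ξ)ση, and κ_-(s_*) d ≤ δ_r with κ_-(s_*) bounded below by a positive constant. Then with probability at least 1 − 1/p, r̂ = r and σ_r(V'V_{(0)}) > c_0, where V ∈ O(m,r) is the right singular vector matrix of XA and c_0 > 0 depends only on c_1 and κ_-(s_*). -/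

import Mathlib

open MeasureTheory ProbabilityTheory Matrix Set
open scoped ENNReal NNReal

noncomputable section

/-- Euclidean (ℓ₂) norm of a finitely indexed real vector. -/
def l2norm {I : Type*} [Fintype I] (v : I → ℝ) : ℝ := Real.sqrt (∑ i, v i ^ 2)

/-- Frobenius norm of a real matrix. -/
def frobNorm {I J : Type*} [Fintype I] [Fintype J] (M : Matrix I J ℝ) : ℝ :=
  Real.sqrt (∑ i, ∑ j, M i j ^ 2)

/-- ℓ₂/ℓ₁ norm: the sum of the ℓ₂ norms of the rows. -/
def norm21 {I J : Type*} [Fintype I] [Fintype J] (M : Matrix I J ℝ) : ℝ :=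
  ∑ i, l2norm (M i)

open Classical in
/-- Row support: indices of nonzero rows. -/
def rowSupport {I J : Type*} [Fintype I] [Fintype J] (M : Matrix I J ℝ) : Finset I :=
  Finset.univ.filter (fun i => M i ≠ 0)

/-- The j-th largest singular value (j ≥ 1), via the Courant–Fischer max–min
characterization: `σ_j(M) = max_{dim V = j} min_{v ∈ V, ‖v‖=1} ‖Mv‖`. -/
def singularValue {I J : Type*} [Fintype I] [Fintype J] (M : Matrix I J ℝ) (j : ℕ) : ℝ :=
  sSup { t | ∃ V : Submodule ℝ (J → ℝ), Module.finrank ℝ V = j ∧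
    t = sInf { u | ∃ v ∈ V, l2norm v = 1 ∧ u = l2norm (M.mulVec v) } }

/-- Operator norm (largest singular value). -/
def opNorm {I J : Type*} [Fintype I] [Fintype J] (M : Matrix I J ℝ) : ℝ :=
  sSup { t | ∃ v : J → ℝ, l2norm v = 1 ∧ t = l2norm (M.mulVec v) }

/-- Schatten-q norm. -/
def schattenNorm {I J : Type*} [Fintype I] [Fintype J] (M : Matrix I J ℝ) (q : ℝ) : ℝ :=
  (∑ i ∈ Finset.Icc 1 (min (Fintype.card I) (Fintype.card J)), singularValue M i ^ q) ^ (1 / q)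

/-- Squared lower k-sparse Riesz constant `κ₋²(k)`:
the minimum over column subsets B with |B| = k of the smallest eigenvalue of X_B' X_B. -/
def kappaMinusSq {n p : ℕ} (X : Matrix (Fin n) (Fin p) ℝ) (k : ℕ) : ℝ :=
  sInf { t | ∃ B : Finset (Fin p), B.card = k ∧ ∃ v : Fin p → ℝ,
    (∀ i, i ∉ B → v i = 0) ∧ l2norm v = 1 ∧ t = l2norm (X.mulVec v) ^ 2 }

/-- Squared upper k-sparse Riesz constant `κ₊²(k)`. -/
def kappaPlusSq {n p : ℕ} (X : Matrix (Fin n) (Fin p) ℝ) (k : ℕ) : ℝ :=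
  sSup { t | ∃ B : Finset (Fin p), B.card = k ∧ ∃ v : Fin p → ℝ,
    (∀ i, i ∉ B → v i = 0) ∧ l2norm v = 1 ∧ t = l2norm (X.mulVec v) ^ 2 }

def kappaMinus {n p : ℕ} (X : Matrix (Fin n) (Fin p) ℝ) (k : ℕ) : ℝ :=
  Real.sqrt (kappaMinusSq X k)

def kappaPlus {n p : ℕ} (X : Matrix (Fin n) (Fin p) ℝ) (k : ℕ) : ℝ :=
  Real.sqrt (kappaPlusSq X k)

/-- Membership in the parameter space Θ(s, r, d, γ): rank r, all nonzero singular values in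
(d, γd], and at most s nonzero rows. (Singular values are automatically nonincreasing.) -/
def memTheta {p m : ℕ} (A : Matrix (Fin p) (Fin m) ℝ) (s r : ℕ) (d γ : ℝ) : Prop :=
  A.rank = r ∧ 0 < d ∧ singularValue A 1 ≤ γ * d ∧ d < singularValue A r ∧
    (rowSupport A).card ≤ s

/-- `V` is a matrix of top-r right singular vectors of `M`: the columns of `V` are orthonormal
eigenvectors of `MᵀM`, the j-th column with eigenvalue `σ_j(M)²`. -/
def IsRightSingularVectors {I J : Type*} [Fintype I] [Fintype J] {r : ℕ}
    (M : Matrix I J ℝ) (V : Matrix J (Fin r) ℝ) : Prop :=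
  Vᵀ * V = 1 ∧ ∀ j : Fin r,
    (Mᵀ * M).mulVec (fun i => V i j) = (singularValue M (j.1 + 1)) ^ 2 • (fun i => V i j)

/-- `U` is a matrix of top-r left singular vectors of `M`. -/
def IsLeftSingularVectors {I J : Type*} [Fintype I] [Fintype J] {r : ℕ}
    (M : Matrix I J ℝ) (U : Matrix I (Fin r) ℝ) : Prop :=
  IsRightSingularVectors Mᵀ U

instance matrixMeasurableSpace {n m : ℕ} : MeasurableSpace (Matrix (Fin n) (Fin m) ℝ) :=
  (inferInstance : MeasurableSpace (Fin n → Fin m → ℝ))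

/-- Law of an n×m random matrix with i.i.d. N(0, v) entries. -/
def gaussianMatrix (n m : ℕ) (v : ℝ≥0) : Measure (Matrix (Fin n) (Fin m) ℝ) :=
  Measure.pi fun _ : Fin n => Measure.pi fun _ : Fin m => gaussianReal 0 v

open Classical in
/-- Kullback–Leibler divergence D(P‖Q). -/
def klDivM {Ω : Type*} [MeasurableSpace Ω] (P Q : Measure Ω) : ℝ≥0∞ :=
  if P ≪ Q ∧ Integrable (fun x => Real.log (P.rnDeriv Q x).toReal) P
  then ENNReal.ofReal (∫ x, Real.log (P.rnDeriv Q x).toReal ∂P)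
  else ∞

/-- ε-packing number of T with respect to the distance ρ: the maximal cardinality of a subset
of T whose pairwise ρ-distances are all at least ε. -/
def packingNumber {α : Type*} (T : Set α) (ρ : α → α → ℝ) (ε : ℝ) : ℕ :=
  sSup { k | ∃ S : Finset α, ↑S ⊆ T ∧ (∀ x ∈ S, ∀ y ∈ S, x ≠ y → ε ≤ ρ x y) ∧ S.card = k }

/-- Moore–Penrose pseudoinverse (characterized by the four Penrose equations). -/
def IsMoorePenrose {k : ℕ} (M Mi : Matrix (Fin k) (Fin k) ℝ) : Prop :=
  M * Mi * M = M ∧ Mi * M * Mi = Mi ∧ (M * Mi)ᵀ = M * Mi ∧ (Mi * M)ᵀ = Mi * M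



/-- Standard Gaussian product measure. -/
def gam (κ : Type*) [Fintype κ] : Measure (κ → ℝ) := Measure.pi fun _ => gaussianReal 0 1

instance gam_prob (κ : Type*) [Fintype κ] : IsProbabilityMeasure (gam κ) := by
  unfold gam; infer_instance

def gdens {κ : Type*} [Fintype κ] (x : κ → ℝ) : ℝ := ∏ k, gaussianPDFReal 0 1 (x k)

lemma gdens_nonneg {κ : Type*} [Fintype κ] (x : κ → ℝ) : 0 ≤ gdens x :=
  Finset.prod_nonneg fun _ _ => gaussianPDFReal_nonneg _ _ _

lemma measurable_gdens {κ : Type*} [Fintype κ] : Measurable (gdens (κ := κ)) := by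
  unfold gdens
  exact Finset.measurable_prod _ fun k _ =>
    (measurable_gaussianPDFReal 0 1).comp (measurable_pi_apply k)

lemma gam_eq (κ : Type*) [Fintype κ] :
    gam κ = volume.withDensity (fun x : κ → ℝ => ENNReal.ofReal (gdens x)) := by
  unfold gam
  apply Measure.pi_eq
  intro s hs
  rw [withDensity_apply _ (MeasurableSet.univ_pi hs), volume_pi, Measure.restrict_pi_pi]
  have hi : ∀ k, Integrable (gaussianPDFReal 0 1) ((volume : Measure ℝ).restrict (s k)) :=
    fun k => (integrable_gaussianPDFReal 0 1).restrict
  rw [← ofReal_integral_eq_lintegral_ofReal]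
  · unfold gdens
    rw [integral_fintype_prod_eq_prod (fun _ => gaussianPDFReal 0 1), ENNReal.ofReal_prod_of_nonneg]
    · refine Finset.prod_congr rfl fun k _ => ?_
      rw [gaussianReal_apply_eq_integral _ one_ne_zero]
    · intro k _
      exact integral_nonneg fun x => gaussianPDFReal_nonneg _ _ _
  · exact Integrable.fintype_prod (f := fun _ => gaussianPDFReal 0 1) hi
  · exact Filter.Eventually.of_forall gdens_nonneg

lemma integral_gam {κ : Type*} [Fintype κ] (f : (κ → ℝ) → ℝ) :
    ∫ x, f x ∂(gam κ) = ∫ x, f x * gdens x := by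
  rw [gam_eq, integral_withDensity_eq_integral_toReal_smul]
  · congr 1; ext x; rw [ENNReal.toReal_ofReal (gdens_nonneg x), smul_eq_mul, mul_comm]
  · exact measurable_gdens.ennreal_ofReal
  · exact Filter.Eventually.of_forall fun x => ENNReal.ofReal_lt_top

lemma integrable_gam {κ : Type*} [Fintype κ] (f : (κ → ℝ) → ℝ) :
    Integrable f (gam κ) ↔ Integrable (fun x => f x * gdens x) := by
  rw [gam_eq, integrable_withDensity_iff_integrable_smul']
  · apply iff_of_eq; congr 1; ext x; rw [ENNReal.toReal_ofReal (gdens_nonneg x), smul_eq_mul, mul_comm]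
  · exact measurable_gdens.ennreal_ofReal
  · exact Filter.Eventually.of_forall fun x => ENNReal.ofReal_lt_top

lemma integrable_exp_abs_gam {κ : Type*} [Fintype κ] (C : ℝ) :
    Integrable (fun x : κ → ℝ => Real.exp (C * ∑ k, |x k|)) (gam κ) := by
  have h1 : Integrable (fun x : ℝ => Real.exp (C * |x|)) (gaussianReal 0 1) := by
    refine ((integrable_exp_mul_gaussianReal C).add (integrable_exp_mul_gaussianReal (-C))).mono
      (by fun_prop) (Filter.Eventually.of_forall fun x => ?_)
    simp only [Pi.add_apply, Real.norm_eq_abs, Real.abs_exp]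
    refine le_trans ?_ (le_abs_self _)
    rcases abs_cases x with ⟨h, _⟩ | ⟨h, _⟩
    · rw [h]; linarith [Real.exp_pos (-C * x)]
    · rw [h, mul_neg, ← neg_mul]; linarith [Real.exp_pos (C * x)]
  have := Integrable.fintype_prod (ι := κ) (f := fun _ x => Real.exp (C * |x|))
    (μ := fun _ => gaussianReal 0 1) (fun _ => h1)
  refine this.congr (Filter.Eventually.of_forall fun x => ?_)
  simp only [← Real.exp_sum, Finset.mul_sum]

/-- continuous with exponential growth -/
def EB {κ : Type*} [Fintype κ] (f : (κ → ℝ) → ℝ) : Prop :=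
  Continuous f ∧ ∃ K C : ℝ, 0 ≤ C ∧ ∀ x, |f x| ≤ K * Real.exp (C * ∑ k, |x k|)

lemma EB.integrable {κ : Type*} [Fintype κ] {f : (κ → ℝ) → ℝ} (h : EB f) :
    Integrable f (gam κ) := by
  obtain ⟨hc, K, C, _, hb⟩ := h
  refine ((integrable_exp_abs_gam C).const_mul K).mono hc.aestronglyMeasurable
    (Filter.Eventually.of_forall fun x => ?_)
  rw [Real.norm_eq_abs]
  exact (hb x).trans (le_abs_self _)

lemma EB.K_nonneg {κ : Type*} [Fintype κ] {f : (κ → ℝ) → ℝ} {K C : ℝ}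
    (h : ∀ x, |f x| ≤ K * Real.exp (C * ∑ k, |x k|)) : 0 ≤ K := by
  have := (abs_nonneg _).trans (h 0)
  simpa using this

lemma EB.mul {κ : Type*} [Fintype κ] {f g : (κ → ℝ) → ℝ} (hf : EB f) (hg : EB g) :
    EB (fun x => f x * g x) := by
  obtain ⟨hc, K, C, hC, hb⟩ := hf
  obtain ⟨hc', K', C', hC', hb'⟩ := hg
  refine ⟨hc.mul hc', K * K', C + C', by positivity, fun x => ?_⟩
  rw [abs_mul, add_mul, Real.exp_add]
  calc _ ≤ _ := mul_le_mul (hb x) (hb' x) (abs_nonneg _) ((abs_nonneg _).trans (hb x))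
    _ = _ := by ring

lemma EB.add {κ : Type*} [Fintype κ] {f g : (κ → ℝ) → ℝ} (hf : EB f) (hg : EB g) :
    EB (fun x => f x + g x) := by
  obtain ⟨hc, K, C, hC, hb⟩ := hf
  obtain ⟨hc', K', C', hC', hb'⟩ := hg
  have hK := EB.K_nonneg hb
  have hK' := EB.K_nonneg hb'
  refine ⟨hc.add hc', K + K', C + C', by positivity, fun x => ?_⟩
  have hs : 0 ≤ ∑ k, |x k| := Finset.sum_nonneg fun _ _ => abs_nonneg _
  have h1 : Real.exp (C * ∑ k, |x k|) ≤ Real.exp ((C + C') * ∑ k, |x k|) :=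
    Real.exp_le_exp.2 (by nlinarith)
  have h2 : Real.exp (C' * ∑ k, |x k|) ≤ Real.exp ((C + C') * ∑ k, |x k|) :=
    Real.exp_le_exp.2 (by nlinarith)
  calc _ ≤ _ := abs_add_le _ _
    _ ≤ _ := add_le_add (hb x) (hb' x)
    _ ≤ K * Real.exp ((C + C') * ∑ k, |x k|) + K' * Real.exp ((C + C') * ∑ k, |x k|) := by gcongr
    _ = _ := by ring

lemma EB.const {κ : Type*} [Fintype κ] (c : ℝ) : EB (fun _ : κ → ℝ => c) :=
  ⟨continuous_const, |c|, 0, le_rfl, fun x => by simp⟩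

lemma EB.sum {κ ι : Type*} [Fintype κ] (s : Finset ι) {f : ι → (κ → ℝ) → ℝ}
    (h : ∀ i ∈ s, EB (f i)) : EB (fun x => ∑ i ∈ s, f i x) := by
  classical
  induction s using Finset.induction_on with
  | empty => simpa using EB.const 0
  | insert a s ha ih =>
    simp only [Finset.sum_insert ha]
    exact (h a (by simp)).add (ih fun i hi => h i (by simp [hi]))

lemma EB.coord {κ : Type*} [Fintype κ] (k : κ) : EB (fun x : κ → ℝ => x k) := by
  refine ⟨continuous_apply k, 1, 1, zero_le_one, fun x => ?_⟩
  have h1 : |x k| ≤ ∑ k, |x k| := Finset.single_le_sum (f := fun k => |x k|)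
    (fun _ _ => abs_nonneg _) (Finset.mem_univ k)
  have := Real.add_one_le_exp (∑ k, |x k|)
  rw [one_mul, one_mul]; linarith

lemma EB.of_le {κ : Type*} [Fintype κ] {f g : (κ → ℝ) → ℝ} (hg : EB g) (hf : Continuous f)
    (h : ∀ x, |f x| ≤ |g x|) : EB f := by
  obtain ⟨_, K, C, hC, hb⟩ := hg
  exact ⟨hf, K, C, hC, fun x => (h x).trans (hb x)⟩

lemma EB.dot {κ : Type*} [Fintype κ] (v : κ → ℝ) : EB (fun x : κ → ℝ => ∑ k, v k * x k) :=
  EB.sum _ fun k _ => (EB.const (v k)).mul (EB.coord k)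

lemma abs_dot_le {κ : Type*} [Fintype κ] (v x : κ → ℝ) :
    |∑ k, v k * x k| ≤ (∑ k, |v k|) * ∑ k, |x k| := by
  calc _ ≤ ∑ k, |v k * x k| := Finset.abs_sum_le_sum_abs _ _
    _ ≤ ∑ k, |v k| * ∑ k, |x k| := by
        refine Finset.sum_le_sum fun k _ => ?_
        rw [abs_mul]
        exact mul_le_mul_of_nonneg_left (Finset.single_le_sum (f := fun k => |x k|)
          (fun _ _ => abs_nonneg _) (Finset.mem_univ k)) (abs_nonneg _)
    _ = _ := by rw [Finset.sum_mul]

/-- exponentials of functions of linear growth -/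
lemma EB.exp {κ : Type*} [Fintype κ] {f : (κ → ℝ) → ℝ} (hf : Continuous f) (K C : ℝ) (hC : 0 ≤ C)
    (h : ∀ x, f x ≤ K + C * ∑ k, |x k|) : EB (fun x => Real.exp (f x)) := by
  refine ⟨by fun_prop, Real.exp K, C, hC, fun x => ?_⟩
  rw [Real.abs_exp, ← Real.exp_add]
  exact Real.exp_le_exp.2 (h x)

lemma EB.expdot {κ : Type*} [Fintype κ] (v : κ → ℝ) (b : ℝ) :
    EB (fun x : κ → ℝ => Real.exp (b * ∑ k, v k * x k)) := by
  refine EB.exp (by fun_prop) 0 (|b| * ∑ k, |v k|) (by positivity) fun x => ?_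
  calc _ ≤ |b * ∑ k, v k * x k| := le_abs_self _
    _ ≤ _ := by rw [abs_mul, zero_add, mul_assoc]; gcongr; exact abs_dot_le v x

lemma gdens_eq {κ : Type*} [Fintype κ] (x : κ → ℝ) :
    gdens x = (∏ _k : κ, (√(2 * Real.pi))⁻¹) * Real.exp (- ∑ k, x k ^ 2 / 2) := by
  unfold gdens gaussianPDFReal
  rw [Finset.prod_mul_distrib]
  congr 1
  · simp
  · rw [← Real.exp_sum, ← Finset.sum_neg_distrib]; congr 1
    refine Finset.sum_congr rfl fun k _ => ?_
    simp; ring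

lemma hasFDerivAt_gdens {κ : Type*} [Fintype κ] (x : κ → ℝ) :
    HasFDerivAt (gdens (κ := κ))
      ((-gdens x) • ∑ k, x k • (ContinuousLinearMap.proj k : (κ → ℝ) →L[ℝ] ℝ)) x := by
  have h : gdens (κ := κ) = fun x =>
    (∏ _k : κ, (√(2 * Real.pi))⁻¹) * Real.exp (- ∑ k, x k ^ 2 / 2) := funext gdens_eq
  have h1 : HasFDerivAt (fun x : κ → ℝ => - ∑ k, x k ^ 2 / 2)
      (- ∑ k, x k • (ContinuousLinearMap.proj k : (κ → ℝ) →L[ℝ] ℝ)) x := by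
    apply HasFDerivAt.neg
    apply HasFDerivAt.fun_sum
    intro k _
    have h2 : HasFDerivAt (fun x : κ → ℝ => x k) (ContinuousLinearMap.proj k : (κ → ℝ) →L[ℝ] ℝ) x :=
      (ContinuousLinearMap.proj k : (κ → ℝ) →L[ℝ] ℝ).hasFDerivAt
    have h3 := (h2.pow 2).mul_const (1/2 : ℝ)
    have h5 : (fun x : κ → ℝ => x k ^ 2 / 2) = fun x => x k ^ 2 * (1 / 2) := by ext; ring
    rw [h5]
    refine h3.congr_fderiv ?_
    ext v
    simp; ring
  have h4 := (h1.exp).const_mul (∏ _k : κ, (√(2 * Real.pi))⁻¹)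
  rw [h]
  refine h4.congr_fderiv ?_
  ext v
  simp
  ring

lemma gam_ibp {κ : Type*} [Fintype κ] {f : (κ → ℝ) → ℝ} {f' : (κ → ℝ) → (κ → ℝ) →L[ℝ] ℝ}
    (v : κ → ℝ) (hf : EB f) (hf' : EB (fun x => f' x v)) (hd : ∀ x, HasFDerivAt f (f' x) x) :
    ∫ x, (∑ k, v k * x k) * f x ∂(gam κ) = ∫ x, f' x v ∂(gam κ) := by
  have hg := fun x : κ → ℝ => hasFDerivAt_gdens x
  have i1 := (integrable_gam _).1 hf'.integrable
  have i2 := (integrable_gam _).1 ((EB.dot v).mul hf).integrable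
  have i3 := (integrable_gam _).1 hf.integrable
  have e : ∀ x : κ → ℝ, f x * ((-gdens x) • ∑ k, x k •
      (ContinuousLinearMap.proj k : (κ → ℝ) →L[ℝ] ℝ)) v = - ((∑ k, v k * x k) * f x * gdens x) := by
    intro x
    have : (∑ k, x k • (ContinuousLinearMap.proj k : (κ → ℝ) →L[ℝ] ℝ)) v = ∑ k, v k * x k := by
      simp [mul_comm]
    rw [_root_.smul_apply, this, smul_eq_mul]; ring
  have := integral_bilinear_hasFDerivAt_right_eq_neg_left_of_integrable (μ := volume)
    (B := ContinuousLinearMap.mul ℝ ℝ) (f := f) (g := gdens) (f' := f') (v := v)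
    (g' := fun x => ((-gdens x) • ∑ k, x k • (ContinuousLinearMap.proj k : (κ → ℝ) →L[ℝ] ℝ)))
    (by simpa using i1) (by simp only [ContinuousLinearMap.mul_apply', e]; exact i2.neg)
    (by simpa using i3) (fun x _ => hd x) (fun x _ => hg x)
  simp only [ContinuousLinearMap.mul_apply', e, integral_neg] at this
  rw [integral_gam, integral_gam]
  linarith



section chi
variable {κ : Type*} [Fintype κ]

/-- the linear functional given by row `j` -/
def rowL (P : Matrix κ κ ℝ) (j : κ) : (κ → ℝ) →L[ℝ] ℝ :=
  ∑ k, P j k • (ContinuousLinearMap.proj k : (κ → ℝ) →L[ℝ] ℝ)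

lemma rowL_apply (P : Matrix κ κ ℝ) (j : κ) (x : κ → ℝ) : rowL P j x = ∑ k, P j k * x k := by
  simp [rowL]

/-- smoothed norm of `P x` -/
def sn (P : Matrix κ κ ℝ) (ε : ℝ) (x : κ → ℝ) : ℝ := √((∑ j, (rowL P j x) ^ 2) + ε)

lemma sn_sq (P : Matrix κ κ ℝ) {ε : ℝ} (hε : 0 < ε) (x : κ → ℝ) :
    sn P ε x ^ 2 = (∑ j, (rowL P j x) ^ 2) + ε :=
  Real.sq_sqrt (add_nonneg (Finset.sum_nonneg fun _ _ => sq_nonneg _) hε.le)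

lemma sn_pos (P : Matrix κ κ ℝ) {ε : ℝ} (hε : 0 < ε) (x : κ → ℝ) : 0 < sn P ε x :=
  Real.sqrt_pos.2 (add_pos_of_nonneg_of_pos (Finset.sum_nonneg fun _ _ => sq_nonneg _) hε)

lemma sn_cont (P : Matrix κ κ ℝ) (ε : ℝ) : Continuous (sn P ε) := by
  unfold sn; fun_prop

lemma sn_fderiv (P : Matrix κ κ ℝ) {ε : ℝ} (hε : 0 < ε) (x : κ → ℝ) :
    HasFDerivAt (sn P ε) ((1 / sn P ε x) • ∑ j, rowL P j x • rowL P j) x := by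
  have h1 : HasFDerivAt (fun x => (∑ j, (rowL P j x) ^ 2) + ε)
      (∑ j, (2 * rowL P j x) • rowL P j) x := by
    apply HasFDerivAt.add_const
    apply HasFDerivAt.fun_sum
    intro j _
    refine ((rowL P j).hasFDerivAt.pow 2).congr_fderiv ?_
    ext v; simp
  have hpos := sn_pos P hε x
  have h2 := h1.sqrt (by have := sn_sq P hε x; rw [← this]; positivity)
  refine h2.congr_fderiv ?_
  change (1 / (2 * sn P ε x)) • _ = _
  ext v
  simp only [_root_.smul_apply, _root_.sum_apply, smul_eq_mul, mul_assoc, ← Finset.mul_sum]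
  field_simp

lemma sn_growth (P : Matrix κ κ ℝ) {ε : ℝ} (hε : 0 < ε) : ∃ C : ℝ, 0 ≤ C ∧ ∀ x,
    sn P ε x ≤ √ε + C * ∑ k, |x k| := by
  refine ⟨∑ j, ∑ k, |P j k|, by positivity, fun x => ?_⟩
  have h1 : ∑ j, |rowL P j x| ≤ (∑ j, ∑ k, |P j k|) * ∑ k, |x k| := by
    rw [Finset.sum_mul]
    refine Finset.sum_le_sum fun j _ => ?_
    rw [rowL_apply]; exact abs_dot_le _ _
  have h2 : sn P ε x ≤ √ε + ∑ j, |rowL P j x| := by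
    have hn : 0 ≤ ∑ j, |rowL P j x| := Finset.sum_nonneg fun _ _ => abs_nonneg _
    apply Real.sqrt_le_iff.2
    refine ⟨by positivity, ?_⟩
    have h3 : ∑ j, (rowL P j x) ^ 2 ≤ (∑ j, |rowL P j x|) ^ 2 := by
      simp_rw [← sq_abs (rowL P _ x)]
      exact Finset.sum_sq_le_sq_sum_of_nonneg fun _ _ => abs_nonneg _
    have := Real.sq_sqrt hε.le
    nlinarith [mul_nonneg (Real.sqrt_nonneg ε) hn]
  linarith

lemma sn_EBexp (P : Matrix κ κ ℝ) {ε : ℝ} (hε : 0 < ε) (l : ℝ) :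
    EB (fun x => Real.exp (l * sn P ε x)) := by
  obtain ⟨C, hC, h⟩ := sn_growth P hε
  refine EB.exp ((sn_cont P ε).const_mul l) (|l| * √ε) (|l| * C) (by positivity) fun x => ?_
  calc l * sn P ε x ≤ |l| * sn P ε x :=
        mul_le_mul_of_nonneg_right (le_abs_self l) (sn_pos P hε x).le
    _ ≤ |l| * (√ε + C * ∑ k, |x k|) := by gcongr; exact h x
    _ = _ := by ring

lemma sn_EB (P : Matrix κ κ ℝ) {ε : ℝ} (hε : 0 < ε) : EB (sn P ε) := by
  refine (sn_EBexp P hε 1).of_le (sn_cont P ε) fun x => ?_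
  rw [abs_of_pos (sn_pos P hε x), Real.abs_exp, one_mul]
  linarith [Real.add_one_le_exp (sn P ε x)]

lemma rowL_EB (P : Matrix κ κ ℝ) (j : κ) : EB (fun x => rowL P j x) := by
  simp_rw [rowL_apply]; exact EB.dot _

lemma chi_ibp (P : Matrix κ κ ℝ) (hT : Pᵀ = P) (hP : P * P = P) {ε : ℝ} (hε : 0 < ε) (l : ℝ)
    (i : κ) :
    ∫ x, (rowL P i x) ^ 2 * Real.exp (l * sn P ε x) ∂(gam κ) =
      ∫ x, P i i * Real.exp (l * sn P ε x) +
        l * ((rowL P i x) ^ 2 * (1 / sn P ε x) * Real.exp (l * sn P ε x)) ∂(gam κ) := by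
  have hd : ∀ x, HasFDerivAt (fun x => rowL P i x * Real.exp (l * sn P ε x))
      (rowL P i x • (Real.exp (l * sn P ε x) • (l • ((1 / sn P ε x) • ∑ j, rowL P j x • rowL P j)))
        + Real.exp (l * sn P ε x) • rowL P i) x := fun x =>
    (rowL P i).hasFDerivAt.mul (((sn_fderiv P hε x).const_mul l).exp)
  have hPP : ∀ j, rowL P j (P i) = P j i := by
    intro j
    rw [rowL_apply]
    have : (P * Pᵀ) j i = P j i := by rw [hT, hP]
    rw [← this, Matrix.mul_apply]; rfl
  have hsum : ∀ x, ∑ j, rowL P j x * P j i = rowL P i x := by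
    intro x
    have h1 : ∀ x, (fun j => rowL P j x) = P *ᵥ x := by
      intro x; ext j; rw [rowL_apply]; rfl
    have h2 : P *ᵥ (P *ᵥ x) = P *ᵥ x := by rw [Matrix.mulVec_mulVec, hP]
    have h3 := congrFun h2 i
    rw [← h1 x] at h3
    refine Eq.trans ?_ h3
    simp only [Matrix.mulVec, dotProduct]
    refine Finset.sum_congr rfl fun j _ => ?_
    have : P j i = P i j := (congrFun (congrFun hT j) i).symm
    rw [this, mul_comm]
  have hval : ∀ x, (rowL P i x • (Real.exp (l * sn P ε x) • (l • ((1 / sn P ε x) • ∑ j, rowL P j x • rowL P j)))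
        + Real.exp (l * sn P ε x) • rowL P i) (P i) = P i i * Real.exp (l * sn P ε x) +
        l * ((rowL P i x) ^ 2 * (1 / sn P ε x) * Real.exp (l * sn P ε x)) := by
    intro x
    simp only [_root_.smul_apply, _root_.sum_apply, _root_.add_apply, smul_eq_mul, hPP, hsum]
    ring
  have hinv : EB (fun x => 1 / sn P ε x) := by
    refine (EB.const (1 / √ε)).of_le ?_ fun x => ?_
    · exact continuous_const.div (sn_cont P ε) fun x => (sn_pos P hε x).ne'
    · have := sn_pos P hε x
      rw [abs_of_pos (by positivity), abs_of_nonneg (by positivity)]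
      apply one_div_le_one_div_of_le (by positivity)
      exact Real.sqrt_le_sqrt (by
        have : 0 ≤ ∑ j, (rowL P j x) ^ 2 := Finset.sum_nonneg fun _ _ => sq_nonneg _
        linarith)
  have := gam_ibp (P i) ((rowL_EB P i).mul (sn_EBexp P hε l))
    (by
      simp_rw [hval, pow_two]
      exact ((EB.const _).mul (sn_EBexp P hε l)).add
        ((EB.const _).mul ((((rowL_EB P i).mul (rowL_EB P i)).mul hinv).mul (sn_EBexp P hε l)))) hd
  simp_rw [hval, ← rowL_apply] at this
  rw [← this]
  congr 1; ext x; ring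

lemma chi_M2 (P : Matrix κ κ ℝ) (hT : Pᵀ = P) (hP : P * P = P) {ε : ℝ} (hε : 0 < ε) {l : ℝ}
    (hl : 0 ≤ l) :
    ∫ x, sn P ε x ^ 2 * Real.exp (l * sn P ε x) ∂(gam κ) ≤
      (P.trace + ε) * ∫ x, Real.exp (l * sn P ε x) ∂(gam κ) +
        l * ∫ x, sn P ε x * Real.exp (l * sn P ε x) ∂(gam κ) := by
  have hE := sn_EBexp P hε l
  have hinv : EB (fun x => 1 / sn P ε x) := by
    refine (EB.const (1 / √ε)).of_le ?_ fun x => ?_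
    · exact continuous_const.div (sn_cont P ε) fun x => (sn_pos P hε x).ne'
    · have := sn_pos P hε x
      rw [abs_of_pos (by positivity), abs_of_nonneg (by positivity)]
      apply one_div_le_one_div_of_le (by positivity)
      exact Real.sqrt_le_sqrt (by
        have : 0 ≤ ∑ j, (rowL P j x) ^ 2 := Finset.sum_nonneg fun _ _ => sq_nonneg _
        linarith)
  have hq : ∀ i, EB (fun x => (rowL P i x) ^ 2) := fun i => by
    simp_rw [pow_two]; exact (rowL_EB P i).mul (rowL_EB P i)
  have e1 : ∫ x, sn P ε x ^ 2 * Real.exp (l * sn P ε x) ∂(gam κ) =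
      ∑ i, ∫ x, (rowL P i x) ^ 2 * Real.exp (l * sn P ε x) ∂(gam κ) +
      ε * ∫ x, Real.exp (l * sn P ε x) ∂(gam κ) := by
    rw [← integral_finsetSum _ fun i _ => ((hq i).mul hE).integrable, ← integral_const_mul,
      ← integral_add (EB.sum _ fun i _ => (hq i).mul hE).integrable
        ((EB.const ε).mul hE).integrable]
    congr 1; ext x; rw [sn_sq P hε, add_mul, Finset.sum_mul]
  rw [e1]
  simp_rw [chi_ibp P hT hP hε l]
  have e2 : ∑ i, ∫ x, P i i * Real.exp (l * sn P ε x) +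
        l * ((rowL P i x) ^ 2 * (1 / sn P ε x) * Real.exp (l * sn P ε x)) ∂(gam κ) ≤
      P.trace * ∫ x, Real.exp (l * sn P ε x) ∂(gam κ) +
        l * ∫ x, sn P ε x * Real.exp (l * sn P ε x) ∂(gam κ) := by
    have hterm : ∀ i, EB (fun x => P i i * Real.exp (l * sn P ε x) +
        l * ((rowL P i x) ^ 2 * (1 / sn P ε x) * Real.exp (l * sn P ε x))) := fun i =>
      ((EB.const _).mul hE).add ((EB.const _).mul (((hq i).mul hinv).mul hE))
    rw [← integral_finsetSum _ fun i _ => (hterm i).integrable, ← integral_const_mul,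
      ← integral_const_mul, ← integral_add ((EB.const P.trace).mul hE).integrable
        ((EB.const l).mul ((sn_EB P hε).mul hE)).integrable]
    apply integral_mono (EB.sum _ fun i _ => hterm i).integrable
      (((EB.const P.trace).mul hE).add ((EB.const l).mul ((sn_EB P hε).mul hE))).integrable
    intro x
    simp only [Finset.sum_add_distrib, ← Finset.sum_mul, ← Finset.mul_sum]
    have hs := sn_pos P hε x
    have h3 : (∑ i, (rowL P i x) ^ 2) * (1 / sn P ε x) ≤ sn P ε x := by
      rw [mul_one_div, div_le_iff₀ hs, ← pow_two, sn_sq P hε]; linarith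
    have : P.trace = ∑ i, P i i := rfl
    rw [this]
    gcongr
  linarith

lemma chi_deriv_le (P : Matrix κ κ ℝ) (hT : Pᵀ = P) (hP : P * P = P) {ε : ℝ} (hε : 0 < ε) {l k : ℝ}
    (hl : 0 ≤ l) (hk : P.trace ≤ k) (hk0 : 0 ≤ k) :
    ∫ x, sn P ε x * Real.exp (l * sn P ε x) ∂(gam κ) ≤
      (√(k + ε) + l) * ∫ x, Real.exp (l * sn P ε x) ∂(gam κ) := by
  have hE := sn_EBexp P hε l
  have hS := sn_EB P hε
  have h2 := chi_M2 P hT hP hε hl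
  set M := ∫ x, Real.exp (l * sn P ε x) ∂(gam κ) with hM
  set M1 := ∫ x, sn P ε x * Real.exp (l * sn P ε x) ∂(gam κ)
  set M2 := ∫ x, sn P ε x ^ 2 * Real.exp (l * sn P ε x) ∂(gam κ)
  have hMpos : 0 < M := integral_exp_pos hE.integrable
  have hcs : ∀ y : ℝ, 0 ≤ M2 - 2 * y * M1 + y ^ 2 * M := by
    intro y
    have : 0 ≤ ∫ x, (sn P ε x - y) ^ 2 * Real.exp (l * sn P ε x) ∂(gam κ) :=
      integral_nonneg fun x => by positivity
    have e : ∫ x, (sn P ε x - y) ^ 2 * Real.exp (l * sn P ε x) ∂(gam κ) =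
        M2 - 2 * y * M1 + y ^ 2 * M := by
      have hS2 : EB (fun x => sn P ε x ^ 2 * Real.exp (l * sn P ε x)) := by
        simp_rw [pow_two]; exact (hS.mul hS).mul hE
      rw [← integral_const_mul, ← integral_const_mul, ← integral_sub hS2.integrable
        ((EB.const _).mul (hS.mul hE)).integrable, ← integral_add _ ((EB.const _).mul hE).integrable]
      · congr 1; ext x; ring
      · exact hS2.integrable.sub ((EB.const _).mul (hS.mul hE)).integrable
    linarith
  have h3 := hcs (M1 / M)
  have h4 : M1 ^ 2 ≤ M * M2 := by
    have : M2 - 2 * (M1 / M) * M1 + (M1 / M) ^ 2 * M = (M * M2 - M1 ^ 2) / M := by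
      field_simp; ring
    rw [this] at h3
    have := (div_nonneg_iff.1 h3)
    rcases this with h | h
    · linarith [h.1]
    · linarith [h.2]
  have h5 : M2 ≤ (k + ε) * M + l * M1 := by nlinarith
  have h6 := Real.sq_sqrt (show 0 ≤ k + ε by positivity)
  have h7 := Real.sqrt_nonneg (k + ε)
  set c := √(k + ε)
  by_contra hcon
  push Not at hcon
  have h8 : M1 ^ 2 ≤ c ^ 2 * M ^ 2 + l * M * M1 := by rw [h6]; nlinarith
  have h9 : c * M < M1 - l * M := by nlinarith
  have h10 : c * M < M1 := by nlinarith
  have h11 : 0 ≤ c * M := by positivity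
  have h12 := mul_lt_mul'' h9 h10 h11 h11
  nlinarith

lemma chi_mgf_sn (P : Matrix κ κ ℝ) (hT : Pᵀ = P) (hP : P * P = P) {ε : ℝ} (hε : 0 < ε) {l k : ℝ}
    (hl : 0 ≤ l) (hk : P.trace ≤ k) (hk0 : 0 ≤ k) :
    ∫ x, Real.exp (l * sn P ε x) ∂(gam κ) ≤ Real.exp (l * √(k + ε) + l ^ 2 / 2) := by
  have hset : integrableExpSet (sn P ε) (gam κ) = univ := by
    ext t; simp only [integrableExpSet, mem_ofPred_eq, mem_univ, iff_true]
    exact (sn_EBexp P hε t).integrable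
  have hD : ∀ t, HasDerivAt (mgf (sn P ε) (gam κ))
      (∫ x, sn P ε x * Real.exp (t * sn P ε x) ∂(gam κ)) t := fun t =>
    hasDerivAt_mgf (by rw [hset]; simp)
  set c := √(k + ε)
  have hD2 : ∀ t, HasDerivAt (fun t => mgf (sn P ε) (gam κ) t * Real.exp (-(t * c + t ^ 2 / 2)))
      ((∫ x, sn P ε x * Real.exp (t * sn P ε x) ∂(gam κ)) * Real.exp (-(t * c + t ^ 2 / 2)) +
        mgf (sn P ε) (gam κ) t * (Real.exp (-(t * c + t ^ 2 / 2)) * (-(c + t)))) t := by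
    intro t
    have h0 : HasDerivAt (fun t : ℝ => -(t * c + t ^ 2 / 2)) (-(c + t)) t := by
      have h1 := (((hasDerivAt_id t).mul_const c).add (((hasDerivAt_id t).pow 2).div_const 2)).neg
      refine h1.congr_deriv ?_
      simp
    exact (hD t).mul h0.exp
  have hanti : AntitoneOn (fun t => mgf (sn P ε) (gam κ) t * Real.exp (-(t * c + t ^ 2 / 2)))
      (Ici 0) := by
    apply antitoneOn_of_hasDerivWithinAt_nonpos (convex_Ici 0)
      (fun t _ => (hD2 t).continuousAt.continuousWithinAt) (fun t _ => (hD2 t).hasDerivWithinAt)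
    intro t ht
    rw [interior_Ici, mem_Ioi] at ht
    have := chi_deriv_le P hT hP hε ht.le hk hk0
    have h2 : mgf (sn P ε) (gam κ) t = ∫ x, Real.exp (t * sn P ε x) ∂(gam κ) := rfl
    rw [h2]
    have h3 := Real.exp_pos (-(t * c + t ^ 2 / 2))
    nlinarith
  have := hanti (mem_Ici.2 le_rfl) (mem_Ici.2 hl) hl
  simp only [mgf_zero, zero_mul] at this
  have h2 : mgf (sn P ε) (gam κ) l = ∫ x, Real.exp (l * sn P ε x) ∂(gam κ) := rfl
  rw [h2, Real.exp_neg, ← div_eq_mul_inv, div_le_iff₀ (Real.exp_pos _)] at this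
  simpa using this

lemma nrm_EB (P : Matrix κ κ ℝ) {l : ℝ} (hl : 0 ≤ l) :
    EB (fun x => Real.exp (l * √(∑ j, (rowL P j x) ^ 2))) := by
  refine (sn_EBexp P one_pos l).of_le (by fun_prop) fun x => ?_
  rw [Real.abs_exp, Real.abs_exp]
  apply Real.exp_le_exp.2
  apply mul_le_mul_of_nonneg_left _ hl
  exact Real.sqrt_le_sqrt (by linarith)

lemma chi_mgf (P : Matrix κ κ ℝ) (hT : Pᵀ = P) (hP : P * P = P) {l k : ℝ}
    (hl : 0 ≤ l) (hk : P.trace ≤ k) (hk0 : 0 ≤ k) :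
    ∫ x, Real.exp (l * √(∑ j, (rowL P j x) ^ 2)) ∂(gam κ) ≤ Real.exp (l * √k + l ^ 2 / 2) := by
  have hlim : Filter.Tendsto (fun ε : ℝ => Real.exp (l * √(k + ε) + l ^ 2 / 2))
      (nhdsWithin 0 (Ioi 0)) (nhds (Real.exp (l * √k + l ^ 2 / 2))) := by
    have : Continuous (fun ε : ℝ => Real.exp (l * √(k + ε) + l ^ 2 / 2)) := by fun_prop
    have h := this.tendsto 0
    simp only [add_zero] at h
    exact h.mono_left nhdsWithin_le_nhds
  refine ge_of_tendsto hlim ?_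
  filter_upwards [self_mem_nhdsWithin] with ε hε
  refine le_trans ?_ (chi_mgf_sn P hT hP hε hl hk hk0)
  apply integral_mono (nrm_EB P hl).integrable (sn_EBexp P hε l).integrable
  intro x
  apply Real.exp_le_exp.2
  apply mul_le_mul_of_nonneg_left _ hl
  exact Real.sqrt_le_sqrt (by linarith [mem_Ioi.1 hε])
end chi



section slepian
variable {κ ι : Type*} [Fintype κ] [Fintype ι]

def dl (v : κ → ℝ) : (κ → ℝ) →L[ℝ] ℝ :=
  ∑ k, v k • (ContinuousLinearMap.proj k : (κ → ℝ) →L[ℝ] ℝ)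

lemma dl_apply (v x : κ → ℝ) : dl v x = ∑ k, v k * x k := by simp [dl]

/-- partition function -/
def sS (β : ℝ) (c : ι → κ → ℝ) (x : κ → ℝ) : ℝ := ∑ i, Real.exp (β * dl (c i) x)

lemma sS_ge (β : ℝ) (c : ι → κ → ℝ) (x : κ → ℝ) (i : ι) :
    Real.exp (β * dl (c i) x) ≤ sS β c x :=
  Finset.single_le_sum (f := fun i => Real.exp (β * dl (c i) x))
    (fun _ _ => (Real.exp_pos _).le) (Finset.mem_univ i)

lemma sS_pos [Nonempty ι] (β : ℝ) (c : ι → κ → ℝ) (x : κ → ℝ) : 0 < sS β c x :=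
  (Real.exp_pos _).trans_le (sS_ge β c x (Classical.arbitrary ι))

lemma sS_EB (β : ℝ) (c : ι → κ → ℝ) : EB (sS β c) := by
  unfold sS
  refine EB.sum _ fun i _ => ?_
  simp_rw [dl_apply]
  exact EB.expdot _ _

lemma sS_cont (β : ℝ) (c : ι → κ → ℝ) : Continuous (sS β c) := (sS_EB β c).1

lemma rpow_le_one_add {s α : ℝ} (hs : 0 < s) (h0 : 0 ≤ α) (h1 : α ≤ 1) : s ^ α ≤ 1 + s := by
  rcases le_total s 1 with h | h
  · have := Real.rpow_le_one hs.le h h0; linarith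
  · have := Real.rpow_le_rpow_of_exponent_le h h1
    rw [Real.rpow_one] at this; linarith

lemma sSpow_cont [Nonempty ι] (β α : ℝ) (c : ι → κ → ℝ) :
    Continuous (fun x => sS β c x ^ α) :=
  (sS_cont β c).rpow_const fun x => Or.inl (sS_pos β c x).ne'

lemma sSpow_EB [Nonempty ι] (β : ℝ) {α : ℝ} (h0 : 0 ≤ α) (h1 : α ≤ 1) (c : ι → κ → ℝ) :
    EB (fun x => sS β c x ^ α) := by
  refine ((EB.const 1).add (sS_EB β c)).of_le (sSpow_cont β α c) fun x => ?_
  have := sS_pos β c x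
  rw [abs_of_pos (by positivity), abs_of_pos (by positivity)]
  exact rpow_le_one_add this h0 h1

def hh (β α : ℝ) (c : ι → κ → ℝ) (i : ι) (x : κ → ℝ) : ℝ :=
  Real.exp (β * dl (c i) x) * sS β c x ^ (α - 1)

lemma hh_nonneg [Nonempty ι] (β α : ℝ) (c : ι → κ → ℝ) (i : ι) (x : κ → ℝ) :
    0 ≤ hh β α c i x := by
  have := sS_pos β c x
  unfold hh; positivity

lemma hh_le [Nonempty ι] (β α : ℝ) (c : ι → κ → ℝ) (i : ι) (x : κ → ℝ) :
    hh β α c i x ≤ sS β c x ^ α := by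
  have hp := sS_pos β c x
  unfold hh
  calc _ ≤ sS β c x * sS β c x ^ (α - 1) := by
        gcongr; exact sS_ge β c x i
    _ = _ := by rw [Real.rpow_sub_one hp.ne']; field_simp

lemma hh_cont [Nonempty ι] (β α : ℝ) (c : ι → κ → ℝ) (i : ι) : Continuous (hh β α c i) := by
  unfold hh
  exact (by fun_prop : Continuous fun x => Real.exp (β * dl (c i) x)).mul (sSpow_cont β (α - 1) c)

lemma hh_EB [Nonempty ι] (β : ℝ) {α : ℝ} (h0 : 0 ≤ α) (h1 : α ≤ 1) (c : ι → κ → ℝ) (i : ι) :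
    EB (hh β α c i) := by
  refine (sSpow_EB β h0 h1 c).of_le (hh_cont β α c i) fun x => ?_
  rw [abs_of_nonneg (hh_nonneg β α c i x)]
  exact (hh_le β α c i x).trans (le_abs_self _)

def ww (β α : ℝ) (c : ι → κ → ℝ) (i j : ι) (x : κ → ℝ) : ℝ :=
  Real.exp (β * dl (c i) x) * Real.exp (β * dl (c j) x) * sS β c x ^ (α - 1 - 1)

lemma ww_nonneg [Nonempty ι] (β α : ℝ) (c : ι → κ → ℝ) (i j : ι) (x : κ → ℝ) :
    0 ≤ ww β α c i j x := by
  have := sS_pos β c x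
  unfold ww; positivity

lemma ww_EB [Nonempty ι] (β : ℝ) {α : ℝ} (h0 : 0 ≤ α) (h1 : α ≤ 1) (c : ι → κ → ℝ) (i j : ι) :
    EB (ww β α c i j) := by
  refine (sSpow_EB β h0 h1 c).of_le ?_ fun x => ?_
  · unfold ww
    exact (by fun_prop : Continuous fun x => Real.exp (β * dl (c i) x) *
      Real.exp (β * dl (c j) x)).mul (sSpow_cont β (α - 1 - 1) c)
  · have hp := sS_pos β c x
    rw [abs_of_nonneg (ww_nonneg β α c i j x), abs_of_pos (by positivity)]
    unfold ww
    calc _ ≤ sS β c x * sS β c x * sS β c x ^ (α - 1 - 1) := by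
          gcongr
          · exact sS_ge β c x i
          · exact sS_ge β c x j
      _ = _ := by rw [Real.rpow_sub_one hp.ne', Real.rpow_sub_one hp.ne']; field_simp

lemma exp_fderiv (β : ℝ) (v x : κ → ℝ) :
    HasFDerivAt (fun x => Real.exp (β * dl v x)) ((β * Real.exp (β * dl v x)) • dl v) x := by
  refine (((dl v).hasFDerivAt.const_mul β).exp).congr_fderiv ?_
  rw [smul_smul, mul_comm]

lemma sS_fderiv (β : ℝ) (c : ι → κ → ℝ) (x : κ → ℝ) :
    HasFDerivAt (sS β c) (∑ j, (β * Real.exp (β * dl (c j) x)) • dl (c j)) x := by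
  unfold sS
  exact HasFDerivAt.fun_sum fun j _ => exp_fderiv β (c j) x

lemma hh_ibp [Nonempty ι] (β : ℝ) {α : ℝ} (h0 : 0 ≤ α) (h1 : α ≤ 1) (c : ι → κ → ℝ) (i : ι)
    (v : κ → ℝ) :
    ∫ x, dl v x * hh β α c i x ∂(gam κ) =
      ∫ x, (β * dl (c i) v * hh β α c i x +
        (α - 1) * β * ∑ j, dl (c j) v * ww β α c i j x) ∂(gam κ) := by
  have hd : ∀ x, HasFDerivAt (hh β α c i) _ x := fun x =>
    (exp_fderiv β (c i) x).mul
      ((sS_fderiv β c x).rpow_const (p := α - 1) (Or.inl (sS_pos β c x).ne'))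
  have hval : ∀ x, (Real.exp (β * (dl (c i)) x) •
        ((α - 1) * sS β c x ^ (α - 1 - 1)) • ∑ j, (β * Real.exp (β * (dl (c j)) x)) • dl (c j) +
      sS β c x ^ (α - 1) • (β * Real.exp (β * (dl (c i)) x)) • dl (c i)) v =
      β * dl (c i) v * hh β α c i x + (α - 1) * β * ∑ j, dl (c j) v * ww β α c i j x := by
    intro x
    simp only [_root_.smul_apply, _root_.sum_apply, _root_.add_apply, smul_eq_mul, hh, ww,
      Finset.mul_sum]
    rw [add_comm]
    congr 1
    · ring
    · exact Finset.sum_congr rfl fun j _ => by ring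
  have := gam_ibp v (hh_EB β h0 h1 c i) (by
    simp_rw [hval]
    exact ((EB.const _).mul (hh_EB β h0 h1 c i)).add ((EB.const _).mul
      (EB.sum _ fun j _ => (EB.const _).mul (ww_EB β h0 h1 c i j)))) hd
  simp_rw [hval] at this
  rw [← this]
  congr 1
  funext x
  rw [dl_apply]

/-- interpolation path -/
def cpath (a b : ι → κ → ℝ) (t : ℝ) (i : ι) : κ → ℝ :=
  fun k => Real.sin t * a i k + Real.cos t * b i k

def cpath' (a b : ι → κ → ℝ) (t : ℝ) (i : ι) : κ → ℝ :=
  fun k => Real.cos t * a i k - Real.sin t * b i k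

lemma dl_cpath (a b : ι → κ → ℝ) (t : ℝ) (i : ι) (x : κ → ℝ) :
    dl (cpath a b t i) x = Real.sin t * dl (a i) x + Real.cos t * dl (b i) x := by
  simp only [dl_apply, cpath, Finset.mul_sum, ← Finset.sum_add_distrib]
  exact Finset.sum_congr rfl fun k _ => by ring

lemma dl_cpath' (a b : ι → κ → ℝ) (t : ℝ) (i : ι) (x : κ → ℝ) :
    dl (cpath' a b t i) x = Real.cos t * dl (a i) x - Real.sin t * dl (b i) x := by
  simp only [dl_apply, cpath', Finset.mul_sum, ← Finset.sum_sub_distrib]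
  exact Finset.sum_congr rfl fun k _ => by ring

lemma dl_comm (u v : κ → ℝ) : dl u v = dl v u := by
  simp only [dl_apply, mul_comm]

lemma path_deriv [Nonempty ι] (β α : ℝ) (a b : ι → κ → ℝ) (x : κ → ℝ) (t : ℝ) :
    HasDerivAt (fun t => sS β (cpath a b t) x ^ α)
      (α * β * ∑ i, dl (cpath' a b t i) x * hh β α (cpath a b t) i x) t := by
  have h1 : ∀ i, HasDerivAt (fun t => Real.exp (β * dl (cpath a b t i) x))
      (Real.exp (β * dl (cpath a b t i) x) * (β * dl (cpath' a b t i) x)) t := by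
    intro i
    apply HasDerivAt.exp
    apply HasDerivAt.const_mul
    simp_rw [dl_cpath, dl_cpath']
    refine (((Real.hasDerivAt_sin t).mul_const _).add
      ((Real.hasDerivAt_cos t).mul_const _)).congr_deriv ?_
    ring
  have h2 : HasDerivAt (fun t => sS β (cpath a b t) x)
      (∑ i, Real.exp (β * dl (cpath a b t i) x) * (β * dl (cpath' a b t i) x)) t := by
    unfold sS
    exact HasDerivAt.fun_sum fun i _ => h1 i
  refine (h2.rpow_const (p := α) (Or.inl (sS_pos β _ x).ne')).congr_deriv ?_
  simp only [hh, Finset.mul_sum, Finset.sum_mul]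
  exact Finset.sum_congr rfl fun i _ => by ring

lemma path_bound [Nonempty ι] {β α : ℝ} (hβ : 0 ≤ β) (h0 : 0 ≤ α) (h1 : α ≤ 1)
    (a b : ι → κ → ℝ) : ∃ B : (κ → ℝ) → ℝ, Integrable B (gam κ) ∧ ∀ x t,
      |α * β * ∑ i, dl (cpath' a b t i) x * hh β α (cpath a b t) i x| ≤ B x := by
  set R : ℝ := ∑ i, ((∑ k, |a i k|) + ∑ k, |b i k|) with hR
  have hR0 : 0 ≤ R := by positivity
  have hRi : ∀ i, (∑ k, |a i k|) + ∑ k, |b i k| ≤ R := fun i =>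
    Finset.single_le_sum (f := fun i => (∑ k, |a i k|) + ∑ k, |b i k|)
      (fun _ _ => by positivity) (Finset.mem_univ i)
  have hab : ∀ i x, |dl (a i) x| + |dl (b i) x| ≤ R * ∑ k, |x k| := by
    intro i x
    have h1 := abs_dot_le (a i) x
    have h2 := abs_dot_le (b i) x
    rw [← dl_apply] at h1 h2
    have h3 := mul_le_mul_of_nonneg_right (hRi i)
      (show 0 ≤ ∑ k, |x k| from Finset.sum_nonneg fun _ _ => abs_nonneg _)
    nlinarith
  have hc : ∀ i x t, |dl (cpath a b t i) x| ≤ R * ∑ k, |x k| := by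
    intro i x t
    rw [dl_cpath]
    refine (abs_add_le _ _).trans (le_trans ?_ (hab i x))
    rw [abs_mul, abs_mul]
    gcongr
    · exact mul_le_of_le_one_left (abs_nonneg _) (Real.abs_sin_le_one t)
    · exact mul_le_of_le_one_left (abs_nonneg _) (Real.abs_cos_le_one t)
  have hc' : ∀ i x t, |dl (cpath' a b t i) x| ≤ R * ∑ k, |x k| := by
    intro i x t
    rw [dl_cpath']
    refine (abs_sub _ _).trans (le_trans ?_ (hab i x))
    rw [abs_mul, abs_mul]
    gcongr
    · exact mul_le_of_le_one_left (abs_nonneg _) (Real.abs_cos_le_one t)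
    · exact mul_le_of_le_one_left (abs_nonneg _) (Real.abs_sin_le_one t)
  refine ⟨fun x => α * β * ∑ _i : ι, (R * ∑ k, |x k|) *
    (1 + ∑ _j : ι, Real.exp (β * R * ∑ k, |x k|)), ?_, ?_⟩
  · apply EB.integrable
    refine (EB.const _).mul (EB.sum _ fun i _ => ?_)
    refine EB.mul ((EB.const R).mul (EB.sum _ fun k _ => ?_)) ((EB.const 1).add
      (EB.sum _ fun j _ => ?_))
    · exact (EB.coord k).of_le (by fun_prop) fun x => by simp
    · exact EB.exp (by fun_prop) 0 (β * R) (by positivity) fun x => by simp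
  · intro x t
    rw [abs_mul, abs_of_nonneg (by positivity : 0 ≤ α * β)]
    refine mul_le_mul_of_nonneg_left ?_ (by positivity)
    refine (Finset.abs_sum_le_sum_abs _ _).trans (Finset.sum_le_sum fun i _ => ?_)
    rw [abs_mul, abs_of_nonneg (hh_nonneg _ _ _ _ _)]
    refine mul_le_mul (hc' i x t) ?_ (hh_nonneg _ _ _ _ _) (by positivity)
    refine (hh_le _ _ _ _ _).trans ((rpow_le_one_add (sS_pos _ _ _) h0 h1).trans ?_)
    gcongr
    unfold sS
    refine Finset.sum_le_sum fun j _ => Real.exp_le_exp.2 ?_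
    rw [mul_assoc]
    exact mul_le_mul_of_nonneg_left ((le_abs_self _).trans (hc j x t)) hβ

theorem slepian_exp [Nonempty ι] {β α : ℝ} (hβ : 0 ≤ β) (h0 : 0 ≤ α) (h1 : α ≤ 1)
    (a b : ι → κ → ℝ) (hab : ∀ i j, dl (a i) (b j) = 0)
    (hd : ∀ i, dl (a i) (a i) = dl (b i) (b i)) (hge : ∀ i j, dl (b i) (b j) ≤ dl (a i) (a j)) :
    ∫ x, sS β a x ^ α ∂(gam κ) ≤ ∫ x, sS β b x ^ α ∂(gam κ) := by
  obtain ⟨B, hB, hbd⟩ := path_bound hβ h0 h1 a b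
  have hD : ∀ t, HasDerivAt (fun t => ∫ x, sS β (cpath a b t) x ^ α ∂(gam κ))
      (∫ x, α * β * ∑ i, dl (cpath' a b t i) x * hh β α (cpath a b t) i x ∂(gam κ)) t := by
    intro t
    refine (hasDerivAt_integral_of_dominated_loc_of_deriv_le (s := univ) (bound := B)
      (F := fun t x => sS β (cpath a b t) x ^ α)
      (F' := fun t x => α * β * ∑ i, dl (cpath' a b t i) x * hh β α (cpath a b t) i x)
      Filter.univ_mem
      (Filter.Eventually.of_forall fun t => (sSpow_cont β α (cpath a b t)).aestronglyMeasurable)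
      (sSpow_EB β h0 h1 (cpath a b t)).integrable ?_ ?_ hB ?_).2
    · refine Continuous.aestronglyMeasurable ?_
      exact continuous_const.mul (continuous_finsetSum _ fun i _ =>
        (dl _).continuous.mul (hh_cont _ _ _ _))
    · exact Filter.Eventually.of_forall fun x t _ => by
        rw [Real.norm_eq_abs]; exact hbd x t
    · exact Filter.Eventually.of_forall fun x t _ => path_deriv β α a b x t
  have hanti : AntitoneOn (fun t => ∫ x, sS β (cpath a b t) x ^ α ∂(gam κ))
      (Icc 0 (Real.pi / 2)) := by
    apply antitoneOn_of_hasDerivWithinAt_nonpos (convex_Icc _ _)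
      (fun t _ => (hD t).continuousAt.continuousWithinAt) (fun t _ => (hD t).hasDerivWithinAt)
    intro t ht
    rw [interior_Icc, mem_Ioo] at ht
    have hsin : 0 ≤ Real.sin t := Real.sin_nonneg_of_nonneg_of_le_pi ht.1.le
      (by linarith [Real.pi_pos])
    have hcos : 0 ≤ Real.cos t := Real.cos_nonneg_of_mem_Icc ⟨by linarith, ht.2.le⟩
    have hba : ∀ i j, dl (b i) (a j) = 0 := fun i j => by rw [dl_comm, hab]
    have hcc : ∀ i j, dl (cpath a b t j) (cpath' a b t i) =
        Real.sin t * Real.cos t * (dl (a i) (a j) - dl (b i) (b j)) := by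
      intro i j
      rw [dl_cpath, dl_comm (a j), dl_comm (b j), dl_cpath', dl_cpath', hab, hba]
      ring
    rw [integral_const_mul, integral_finsetSum _ fun i _ =>
      (EB.mul (f := fun x => dl (cpath' a b t i) x) (by simp_rw [dl_apply]; exact EB.dot _)
        (hh_EB β h0 h1 (cpath a b t) i)).integrable]
    refine mul_nonpos_of_nonneg_of_nonpos (by positivity) (Finset.sum_nonpos fun i _ => ?_)
    rw [hh_ibp β h0 h1]
    apply integral_nonpos
    intro x
    simp only [hcc, hd, sub_self, mul_zero, zero_mul, zero_add, Pi.zero_apply]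
    refine mul_nonpos_of_nonpos_of_nonneg (by nlinarith) (Finset.sum_nonneg fun j _ => ?_)
    exact mul_nonneg (mul_nonneg (mul_nonneg hsin hcos) (by linarith [hge i j]))
      (ww_nonneg _ _ _ _ _ _)
  have hpi := Real.pi_pos
  have := hanti (left_mem_Icc.2 (by positivity)) (right_mem_Icc.2 (by positivity))
    (by positivity : (0 : ℝ) ≤ Real.pi / 2)
  have e1 : cpath a b (Real.pi / 2) = a := by ext i k; simp [cpath]
  have e0 : cpath a b 0 = b := by ext i k; simp [cpath]
  simpa only [e1, e0] using this

end slepian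



section tail

lemma gam_split {κ₁ κ₂ : Type*} [Fintype κ₁] [Fintype κ₂] (f : (κ₁ → ℝ) → ℝ) (g : (κ₂ → ℝ) → ℝ) :
    ∫ x, f (fun k => x (Sum.inl k)) * g (fun k => x (Sum.inr k)) ∂(gam (κ₁ ⊕ κ₂)) =
      (∫ x, f x ∂(gam κ₁)) * ∫ x, g x ∂(gam κ₂) := by
  have h := measurePreserving_sumPiEquivProdPi (X := fun _ : κ₁ ⊕ κ₂ => ℝ)
    (fun _ => gaussianReal 0 1)
  have h2 := h.integral_comp' (g := fun y : (κ₁ → ℝ) × (κ₂ → ℝ) => f y.1 * g y.2)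
  rw [integral_prod_mul] at h2
  exact h2

lemma gam_unit {f : ℝ → ℝ} : ∫ x, f (x ()) ∂(gam Unit) = ∫ x, f x ∂(gaussianReal 0 1) := by
  have h := measurePreserving_piUnique (X := fun _ : Unit => ℝ) (fun _ => gaussianReal 0 1)
  exact h.integral_comp' (g := f)

lemma gam_unit_exp (l : ℝ) : ∫ x, Real.exp (l * x ()) ∂(gam Unit) = Real.exp (l ^ 2 / 2) := by
  rw [gam_unit (f := fun y => Real.exp (l * y))]
  have := congrFun (mgf_id_gaussianReal (μ := 0) (v := 1)) l
  simpa [mgf] using this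

lemma EB.inl {κ₁ κ₂ : Type*} [Fintype κ₁] [Fintype κ₂] {f : (κ₁ → ℝ) → ℝ} (h : EB f) :
    EB (fun x : κ₁ ⊕ κ₂ → ℝ => f (fun k => x (Sum.inl k))) := by
  obtain ⟨hc, K, C, hC, hb⟩ := h
  have hK := EB.K_nonneg hb
  refine ⟨hc.comp (by fun_prop), K, C, hC, fun x => (hb _).trans ?_⟩
  rw [Fintype.sum_sum_type]
  have : 0 ≤ ∑ k, |x (Sum.inr k)| := by positivity
  gcongr
  linarith

lemma EB.inr {κ₁ κ₂ : Type*} [Fintype κ₁] [Fintype κ₂] {f : (κ₂ → ℝ) → ℝ} (h : EB f) :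
    EB (fun x : κ₁ ⊕ κ₂ → ℝ => f (fun k => x (Sum.inr k))) := by
  obtain ⟨hc, K, C, hC, hb⟩ := h
  have hK := EB.K_nonneg hb
  refine ⟨hc.comp (by fun_prop), K, C, hC, fun x => (hb _).trans ?_⟩
  rw [Fintype.sum_sum_type]
  have : 0 ≤ ∑ k, |x (Sum.inl k)| := by positivity
  gcongr
  linarith

variable {I J ι : Type*} [Fintype I] [Fintype J] [Fintype ι] 

def ca (u : I → ℝ) (v : J → ℝ) : (I × J) ⊕ (Unit ⊕ (I ⊕ J)) → ℝ :=
  Sum.elim (fun k => u k.1 * v k.2) (Sum.elim (fun _ => 1) (fun _ => 0))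

def cb (u : I → ℝ) (v : J → ℝ) : (I × J) ⊕ (Unit ⊕ (I ⊕ J)) → ℝ :=
  Sum.elim (fun _ => 0) (Sum.elim (fun _ => 0) (Sum.elim u v))

lemma dl_ca (u : I → ℝ) (v : J → ℝ) (x) : dl (ca u v) x =
    dl (fun k : I × J => u k.1 * v k.2) (fun k => x (Sum.inl k)) + x (Sum.inr (Sum.inl ())) := by
  simp [dl_apply, ca]

lemma dl_cb (u : I → ℝ) (v : J → ℝ) (x) : dl (cb u v) x =
    dl u (fun k => x (Sum.inr (Sum.inr (Sum.inl k)))) +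
      dl v (fun k => x (Sum.inr (Sum.inr (Sum.inr k)))) := by
  simp [dl_apply, cb]

lemma dl_tensor (u u' : I → ℝ) (v v' : J → ℝ) :
    dl (fun k : I × J => u k.1 * v k.2) (fun k => u' k.1 * v' k.2) = dl u u' * dl v v' := by
  simp only [dl_apply, Fintype.sum_prod_type, Finset.sum_mul_sum]
  exact Finset.sum_congr rfl fun i _ => Finset.sum_congr rfl fun j _ => by ring

lemma dl_le_one {u u' : I → ℝ} (h : dl u u = 1) (h' : dl u' u' = 1) : dl u u' ≤ 1 := by
  have h0 : 0 ≤ ∑ k, (u k - u' k) ^ 2 := Finset.sum_nonneg fun _ _ => sq_nonneg _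
  have : ∑ k, (u k - u' k) ^ 2 = dl u u + dl u' u' - 2 * dl u u' := by
    simp only [dl_apply, Finset.mul_sum, ← Finset.sum_add_distrib, ← Finset.sum_sub_distrib]
    exact Finset.sum_congr rfl fun i _ => by ring
  linarith

lemma dl_le_norm (u x : I → ℝ) (h : dl u u = 1) : dl u x ≤ √(∑ k, x k ^ 2) := by
  rw [dl_apply] at *
  have := Finset.sum_mul_sq_le_sq_mul_sq Finset.univ u x
  apply Real.le_sqrt_of_sq_le
  have h2 : ∑ k, u k ^ 2 = 1 := by rw [← h]; exact Finset.sum_congr rfl fun i _ => by ring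
  rw [h2, one_mul] at this
  exact this

lemma gordon_mgf [Nonempty ι] [DecidableEq J] (P : Matrix I I ℝ) (hT : Pᵀ = P) (hP : P * P = P)
    {q : ℝ} (hq : P.trace ≤ q) (hq0 : 0 ≤ q) {l β : ℝ} (hl : 0 ≤ l) (hβ : 0 < β) (hlβ : l ≤ β)
    (u : ι → I → ℝ) (v : ι → J → ℝ) (hu : ∀ i, dl (u i) (u i) = 1) (hv : ∀ i, dl (v i) (v i) = 1)
    (hPu : ∀ i, P *ᵥ (u i) = u i) :
    ∫ x, sS β (fun i (k : I × J) => u i k.1 * v i k.2) x ^ (l / β) ∂(gam (I × J)) ≤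
      (Fintype.card ι : ℝ) ^ (l / β) *
        Real.exp (l * (√(Fintype.card J) + √q) + l ^ 2 / 2) := by
  have hα0 : 0 ≤ l / β := by positivity
  have hα1 : l / β ≤ 1 := (div_le_one hβ).2 hlβ
  have key := slepian_exp (β := β) (α := l / β) hβ.le hα0 hα1
    (fun i => ca (u i) (v i)) (fun i => cb (u i) (v i))
    (fun i j => by rw [dl_ca]; simp [cb, dl_apply])
    (fun i => by
      rw [dl_ca, dl_cb]
      simp only [ca, cb, Sum.elim_inl, Sum.elim_inr]
      rw [dl_tensor]
      have h1 := hu i; have h2 := hv i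
      simp only [h1, h2]; norm_num)
    (fun i j => by
      rw [dl_ca, dl_cb]
      simp only [ca, cb, Sum.elim_inl, Sum.elim_inr]
      rw [dl_tensor]
      have h1 := dl_le_one (hu i) (hu j)
      have h2 := dl_le_one (hv i) (hv j)
      change dl (u i) (u j) + dl (v i) (v j) ≤ _
      nlinarith)
  have hL : ∀ x, sS β (fun i => ca (u i) (v i)) x ^ (l / β) =
      (fun y => sS β (fun i (k : I × J) => u i k.1 * v i k.2) y ^ (l / β))
        (fun k => x (Sum.inl k)) *
      (fun z : Unit ⊕ (I ⊕ J) → ℝ => (fun w : Unit → ℝ => Real.exp (l * w ())) (fun k => z (Sum.inl k)) *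
        (fun _ => (1 : ℝ)) (fun k => z (Sum.inr k))) (fun k => x (Sum.inr k)) := by
    intro x
    have : sS β (fun i => ca (u i) (v i)) x =
        sS β (fun i (k : I × J) => u i k.1 * v i k.2) (fun k => x (Sum.inl k)) *
          Real.exp (β * x (Sum.inr (Sum.inl ()))) := by
      simp only [sS, dl_ca, mul_add, Real.exp_add, Finset.sum_mul]
    rw [this, Real.mul_rpow (sS_pos _ _ _).le (Real.exp_pos _).le, ← Real.exp_mul]
    simp only [mul_one]
    congr 2
    field_simp
  rw [integral_congr_ae (Filter.Eventually.of_forall hL),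
    gam_split (fun y => sS β (fun i (k : I × J) => u i k.1 * v i k.2) y ^ (l / β))
      (fun z : Unit ⊕ (I ⊕ J) → ℝ => (fun w : Unit → ℝ => Real.exp (l * w ()))
        (fun k => z (Sum.inl k)) * (fun _ => (1 : ℝ)) (fun k => z (Sum.inr k))), gam_split (fun w : Unit → ℝ => Real.exp (l * w ())) (fun _ => (1 : ℝ)),
    gam_unit_exp] at key
  have hPu' : ∀ i (x : I → ℝ), dl (u i) x = dl (u i) (fun k => rowL P k x) := by
    intro i x
    have : dl (u i) (fun k => rowL P k x) = (u i) ⬝ᵥ (P *ᵥ x) := by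
      simp [dl_apply, rowL_apply, dotProduct, mulVec]
    rw [this, dotProduct_mulVec, ← mulVec_transpose, hT, hPu, dl_apply]; rfl
  have hR : ∀ x, sS β (fun i => cb (u i) (v i)) x ^ (l / β) ≤
      (fun _ : I × J → ℝ => (Fintype.card ι : ℝ) ^ (l / β)) (fun k => x (Sum.inl k)) *
      (fun z : Unit ⊕ (I ⊕ J) → ℝ => (fun w : Unit → ℝ => (1 : ℝ)) (fun k => z (Sum.inl k)) *
        (fun y : I ⊕ J → ℝ =>
          (fun x => Real.exp (l * √(∑ k, (rowL P k x) ^ 2))) (fun k => y (Sum.inl k)) *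
          (fun x => Real.exp (l * √(∑ k, (rowL (1 : Matrix J J ℝ) k x) ^ 2)))
            (fun k => y (Sum.inr k)))
        (fun k => z (Sum.inr k))) (fun k => x (Sum.inr k)) := by
    intro x
    simp only [one_mul]
    rw [← Real.exp_add]
    set E := √(∑ k, (rowL P k fun k => x (Sum.inr (Sum.inr (Sum.inl k)))) ^ 2) with hE
    set F := √(∑ k, (rowL (1 : Matrix J J ℝ) k fun k => x (Sum.inr (Sum.inr (Sum.inr k)))) ^ 2) with hF
    have h1 : sS β (fun i => cb (u i) (v i)) x ≤ (Fintype.card ι : ℝ) * Real.exp (β * (E + F)) := by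
      unfold sS
      refine (Finset.sum_le_card_nsmul _ _ (Real.exp (β * (E + F))) fun i _ => ?_).trans_eq
        (by simp)
      rw [Real.exp_le_exp, dl_cb]
      refine mul_le_mul_of_nonneg_left (add_le_add ?_ ?_) hβ.le
      · rw [hPu']; exact dl_le_norm _ _ (hu i)
      · refine (dl_le_norm _ _ (hv i)).trans_eq ?_
        rw [hF]; congr 2; ext k; simp [rowL_apply, Matrix.one_apply]
    refine (Real.rpow_le_rpow (sS_pos _ _ _).le h1 hα0).trans_eq ?_
    rw [Real.mul_rpow (by positivity) (Real.exp_pos _).le, ← Real.exp_mul]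
    congr 2
    field_simp
  have hmono := integral_mono_of_nonneg (μ := gam ((I × J) ⊕ (Unit ⊕ (I ⊕ J))))
    (Filter.Eventually.of_forall fun x =>
      Real.rpow_nonneg (sS_pos β (fun i => cb (u i) (v i)) x).le (l / β)) ?_
    (Filter.Eventually.of_forall hR)
  · rw [gam_split (fun _ : I × J → ℝ => (Fintype.card ι : ℝ) ^ (l / β))
      (fun z : Unit ⊕ (I ⊕ J) → ℝ => (fun w : Unit → ℝ => (1 : ℝ)) (fun k => z (Sum.inl k)) *
        (fun y : I ⊕ J → ℝ =>
          (fun x => Real.exp (l * √(∑ k, (rowL P k x) ^ 2))) (fun k => y (Sum.inl k)) *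
          (fun x => Real.exp (l * √(∑ k, (rowL (1 : Matrix J J ℝ) k x) ^ 2)))
            (fun k => y (Sum.inr k)))
        (fun k => z (Sum.inr k))), gam_split (fun _ : Unit → ℝ => (1 : ℝ))
        (fun y : I ⊕ J → ℝ =>
          (fun x => Real.exp (l * √(∑ k, (rowL P k x) ^ 2))) (fun k => y (Sum.inl k)) *
          (fun x => Real.exp (l * √(∑ k, (rowL (1 : Matrix J J ℝ) k x) ^ 2)))
            (fun k => y (Sum.inr k))), gam_split (fun x => Real.exp (l * √(∑ k, (rowL P k x) ^ 2)))
          (fun x => Real.exp (l * √(∑ k, (rowL (1 : Matrix J J ℝ) k x) ^ 2)))] at hmono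
    have c1 := chi_mgf P hT hP hl hq hq0
    have c2 := chi_mgf (1 : Matrix J J ℝ) transpose_one (one_mul 1) hl
      (k := Fintype.card J) (by simp) (by positivity)
    have h3 := key.trans hmono
    simp only [integral_const, probReal_univ, smul_eq_mul, mul_one, one_mul] at h3
    have h4 : (∫ x, sS β (fun i (k : I × J) => u i k.1 * v i k.2) x ^ (l / β) ∂(gam (I × J))) *
        Real.exp (l ^ 2 / 2) ≤ (Fintype.card ι : ℝ) ^ (l / β) *
        (Real.exp (l * √q + l ^ 2 / 2) * Real.exp (l * √(Fintype.card J) + l ^ 2 / 2)) := by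
      refine h3.trans ?_
      gcongr
    have h5 : Real.exp (l * √q + l ^ 2 / 2) * Real.exp (l * √(Fintype.card J) + l ^ 2 / 2) =
      Real.exp (l * (√(Fintype.card J) + √q) + l ^ 2 / 2) * Real.exp (l ^ 2 / 2) := by
      rw [← Real.exp_add, ← Real.exp_add]; congr 1; ring
    rw [h5, ← mul_assoc] at h4
    exact le_of_mul_le_mul_right h4 (Real.exp_pos _)
  · exact ((EB.const _).mul ((EB.const 1).mul
      ((nrm_EB P hl).inl.mul (nrm_EB (1 : Matrix J J ℝ) hl).inr).inr).inr).integrable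

lemma finite_tail [Nonempty ι] [DecidableEq J] (P : Matrix I I ℝ) (hT : Pᵀ = P) (hP : P * P = P)
    {q : ℝ} (hq : P.trace ≤ q) (hq0 : 0 ≤ q) {l : ℝ} (hl : 0 ≤ l)
    (u : ι → I → ℝ) (v : ι → J → ℝ) (hu : ∀ i, dl (u i) (u i) = 1) (hv : ∀ i, dl (v i) (v i) = 1)
    (hPu : ∀ i, P *ᵥ (u i) = u i) :
    (gam (I × J)).real {x | ∃ i, √(Fintype.card J) + √q + l ≤
        dl (fun k : I × J => u i k.1 * v i k.2) x} ≤ Real.exp (-(l ^ 2) / 2) := by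
  set T := √(Fintype.card J) + √q + l with hTd
  have hb : ∀ β : ℝ, 0 < β → l ≤ β → (gam (I × J)).real {x | ∃ i, T ≤
      dl (fun k : I × J => u i k.1 * v i k.2) x} ≤
      (Fintype.card ι : ℝ) ^ (l / β) * Real.exp (-(l ^ 2) / 2) := by
    intro β hβ hlβ
    have hα0 : 0 ≤ l / β := by positivity
    have hα1 : l / β ≤ 1 := (div_le_one hβ).2 hlβ
    have h1 := gordon_mgf P hT hP hq hq0 hl hβ hlβ u v hu hv hPu
    have h2 := mul_meas_ge_le_integral_of_nonneg (μ := gam (I × J))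
      (f := fun x => sS β (fun i (k : I × J) => u i k.1 * v i k.2) x ^ (l / β))
      (Filter.Eventually.of_forall fun x => Real.rpow_nonneg (sS_pos _ _ _).le _)
      (sSpow_EB β hα0 hα1 _).integrable (Real.exp (l * T))
    have h3 : (gam (I × J)).real {x | ∃ i, T ≤ dl (fun k : I × J => u i k.1 * v i k.2) x} ≤
        (gam (I × J)).real {x | Real.exp (l * T) ≤
          sS β (fun i (k : I × J) => u i k.1 * v i k.2) x ^ (l / β)} := by
      refine measureReal_mono ?_
      rintro x ⟨i, hi⟩
      have h4 : Real.exp (β * T) ≤ sS β (fun i (k : I × J) => u i k.1 * v i k.2) x :=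
        (Real.exp_le_exp.2 (mul_le_mul_of_nonneg_left hi hβ.le)).trans
          (sS_ge β (fun i (k : I × J) => u i k.1 * v i k.2) x i)
      have h5 := Real.rpow_le_rpow (Real.exp_pos _).le h4 hα0
      rw [← Real.exp_mul] at h5
      have h6 : β * T * (l / β) = l * T := by field_simp
      rw [h6] at h5
      exact h5
    have h7 : Real.exp (l * T) * (gam (I × J)).real {x | ∃ i, T ≤
        dl (fun k : I × J => u i k.1 * v i k.2) x} ≤
        Real.exp (l * T) * ((Fintype.card ι : ℝ) ^ (l / β) * Real.exp (-(l ^ 2) / 2)) := by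
      refine (mul_le_mul_of_nonneg_left h3 (Real.exp_pos _).le).trans ((h2.trans h1).trans_eq ?_)
      rw [mul_left_comm, ← Real.exp_add]
      congr 2
      rw [hTd]; ring
    exact le_of_mul_le_mul_left h7 (Real.exp_pos _)
  have hlim : Filter.Tendsto (fun β : ℝ => (Fintype.card ι : ℝ) ^ (l / β) *
      Real.exp (-(l ^ 2) / 2)) Filter.atTop (nhds ((Fintype.card ι : ℝ) ^ (0 : ℝ) *
      Real.exp (-(l ^ 2) / 2))) := by
    refine Filter.Tendsto.mul_const _ ?_
    refine Filter.Tendsto.rpow tendsto_const_nhds (Filter.Tendsto.const_div_atTop Filter.tendsto_id l)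
      (Or.inl ?_)
    exact_mod_cast Fintype.card_ne_zero
  rw [Real.rpow_zero, one_mul] at hlim
  refine ge_of_tendsto hlim ?_
  filter_upwards [Filter.eventually_gt_atTop 0, Filter.eventually_ge_atTop l] with β h1 h2
  exact hb β h1 h2

lemma seq_tail [DecidableEq J] (P : Matrix I I ℝ) (hT : Pᵀ = P) (hP : P * P = P)
    {q : ℝ} (hq : P.trace ≤ q) (hq0 : 0 ≤ q) {l : ℝ} (hl : 0 ≤ l)
    (u : ℕ → I → ℝ) (v : ℕ → J → ℝ) (hu : ∀ i, dl (u i) (u i) = 1) (hv : ∀ i, dl (v i) (v i) = 1)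
    (hPu : ∀ i, P *ᵥ (u i) = u i) :
    (gam (I × J)) {x | ∃ i, √(Fintype.card J) + √q + l ≤
        dl (fun k : I × J => u i k.1 * v i k.2) x} ≤ ENNReal.ofReal (Real.exp (-(l ^ 2) / 2)) := by
  have hU : {x | ∃ i, √(Fintype.card J) + √q + l ≤ dl (fun k : I × J => u i k.1 * v i k.2) x} =
      ⋃ N : ℕ, {x | ∃ i : Fin (N + 1), √(Fintype.card J) + √q + l ≤
        dl (fun k : I × J => u i k.1 * v i k.2) x} := by
    ext x
    simp only [mem_ofPred_eq, mem_iUnion]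
    constructor
    · rintro ⟨i, hi⟩; exact ⟨i, ⟨i, Nat.lt_succ_self i⟩, hi⟩
    · rintro ⟨N, i, hi⟩; exact ⟨i, hi⟩
  rw [hU, Monotone.measure_iUnion]
  · refine iSup_le fun N => ?_
    have := finite_tail P hT hP hq hq0 hl (fun i : Fin (N + 1) => u i) (fun i => v i)
      (fun i => hu i) (fun i => hv i) (fun i => hPu i)
    rw [← ofReal_measureReal]
    exact ENNReal.ofReal_le_ofReal this
  · intro N M hNM x
    rintro ⟨i, hi⟩
    exact ⟨⟨i, by omega⟩, hi⟩

theorem op_tail [DecidableEq J] (P : Matrix I I ℝ) (hT : Pᵀ = P) (hP : P * P = P)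
    {q : ℝ} (hq : P.trace ≤ q) (hq0 : 0 ≤ q) {l : ℝ} (hl : 0 ≤ l) :
    (gam (I × J)) {x | ∃ v : J → ℝ, ∑ j, v j ^ 2 = 1 ∧ √(Fintype.card J) + √q + l <
        √(∑ i, ((P * Matrix.of fun i j => x (i, j)) *ᵥ v) i ^ 2)} ≤
      ENNReal.ofReal (Real.exp (-(l ^ 2) / 2)) := by
  set T := √(Fintype.card J) + √q + l with hTd
  have hT0 : 0 ≤ T := by positivity
  let S : Set ((I → ℝ) × (J → ℝ)) :=
    {w | dl w.1 w.1 = 1 ∧ dl w.2 w.2 = 1 ∧ P *ᵥ w.1 = w.1}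
  have hsub : ∀ x : I × J → ℝ, (∃ v : J → ℝ, ∑ j, v j ^ 2 = 1 ∧ T <
      √(∑ i, ((P * Matrix.of fun i j => x (i, j)) *ᵥ v) i ^ 2)) →
      ∃ w : S, T < dl (fun k : I × J => w.1.1 k.1 * w.1.2 k.2) x := by
    rintro x ⟨v, hv, hx⟩
    set y := (P * Matrix.of fun i j => x (i, j)) *ᵥ v with hy
    set N := √(∑ i, y i ^ 2) with hN
    have hN0 : 0 < N := hT0.trans_lt hx
    have hN2 : N ^ 2 = ∑ i, y i ^ 2 := Real.sq_sqrt (by positivity)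
    have hPy : P *ᵥ y = y := by
      rw [hy, ← mulVec_mulVec, mulVec_mulVec, hP]
    refine ⟨⟨(N⁻¹ • y, v), ?_, ?_, ?_⟩, ?_⟩
    · simp only [dl_apply, Pi.smul_apply, smul_eq_mul]
      have : ∀ k, N⁻¹ * y k * (N⁻¹ * y k) = N⁻¹ ^ 2 * y k ^ 2 := fun k => by ring
      simp_rw [this, ← Finset.mul_sum, ← hN2]
      field_simp
    · rw [← hv, dl_apply]; exact Finset.sum_congr rfl fun j _ => by ring
    · simp only [mulVec_smul, hPy]
    · refine hx.trans_eq ?_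
      have h1 : dl (fun k : I × J => (N⁻¹ • y) k.1 * v k.2) x =
          N⁻¹ * (y ⬝ᵥ ((Matrix.of fun i j => x (i, j)) *ᵥ v)) := by
        simp only [dl_apply, Fintype.sum_prod_type, dotProduct, mulVec, Matrix.of_apply,
          Finset.mul_sum, Pi.smul_apply, smul_eq_mul]
        exact Finset.sum_congr rfl fun i _ => Finset.sum_congr rfl fun j _ => by ring
      have h2 : y ⬝ᵥ ((Matrix.of fun i j => x (i, j)) *ᵥ v) = N ^ 2 := by
        have h3 : y ⬝ᵥ y = N ^ 2 := by
          rw [hN2, dotProduct]; exact Finset.sum_congr rfl fun i _ => by ring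
        rw [← h3]
        have h4 : y ⬝ᵥ y = y ⬝ᵥ (P *ᵥ ((Matrix.of fun i j => x (i, j)) *ᵥ v)) := by
          rw [mulVec_mulVec]
        rw [h4, dotProduct_mulVec y P, ← mulVec_transpose P, hT, hPy]
      rw [h1, h2]
      field_simp
  rcases isEmpty_or_nonempty S with hS | hS
  · have : {x : I × J → ℝ | ∃ v : J → ℝ, ∑ j, v j ^ 2 = 1 ∧ T <
        √(∑ i, ((P * Matrix.of fun i j => x (i, j)) *ᵥ v) i ^ 2)} = ∅ := by
      ext x
      simp only [mem_ofPred_eq, mem_empty_iff_false, iff_false]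
      intro h
      obtain ⟨w, _⟩ := hsub x h
      exact hS.elim w
    rw [this]; simp
  · let D := TopologicalSpace.denseSeq S
    refine (measure_mono ?_).trans (seq_tail P hT hP hq hq0 hl (fun i => (D i).1.1)
      (fun i => (D i).1.2) (fun i => (D i).2.1) (fun i => (D i).2.2.1) (fun i => (D i).2.2.2))
    intro x hx
    obtain ⟨w, hw⟩ := hsub x hx
    have hc : Continuous fun w : S => dl (fun k : I × J => w.1.1 k.1 * w.1.2 k.2) x := by
      simp only [dl_apply]; fun_prop
    obtain ⟨i, hi⟩ := (TopologicalSpace.denseRange_denseSeq S).exists_mem_open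
      (isOpen_lt continuous_const hc) ⟨w, hw⟩
    exact ⟨i, le_of_lt hi⟩

end tail



section transfer

lemma gm_map (n m : ℕ) (c : ℝ) : MeasurePreserving
    (fun (x : Fin n × Fin m → ℝ) (i : Fin n) (j : Fin m) => c * x (i, j)) (gam (Fin n × Fin m))
    (Measure.pi fun _ : Fin n => Measure.pi fun _ : Fin m => gaussianReal 0 (Real.toNNReal (c ^ 2))) := by
  have h1 : MeasurePreserving (fun (x : Fin n × Fin m → ℝ) k => c * x k) (gam (Fin n × Fin m))
      (Measure.pi fun _ => gaussianReal 0 (Real.toNNReal (c ^ 2))) := by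
    refine measurePreserving_pi _ _ fun k => ⟨by fun_prop, ?_⟩
    rw [gaussianReal_map_const_mul]
    congr 1
    · simp
    · ext; simp [Real.coe_toNNReal _ (sq_nonneg c)]
  have h2 := Measure.infinitePi_map_curry (ι := Fin n) (κ := Fin m)
    (fun _ _ => gaussianReal 0 (Real.toNNReal (c ^ 2)))
  simp only [Measure.infinitePi_eq_pi] at h2
  exact (MeasurePreserving.mk (by fun_prop) h2).comp h1

theorem gm_tail (n m : ℕ) {c : ℝ} (hc : 0 < c) (P : Matrix (Fin n) (Fin n) ℝ)
    (hT : Pᵀ = P) (hP : P * P = P)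
    {q : ℝ} (hq : P.trace ≤ q) (hq0 : 0 ≤ q) {l : ℝ} (hl : 0 ≤ l) :
    gaussianMatrix n m (Real.toNNReal (c ^ 2))
      {z | ∃ v : Fin m → ℝ, l2norm v = 1 ∧ c * (√m + √q + l) < l2norm ((P * z) *ᵥ v)} ≤
      ENNReal.ofReal (Real.exp (-(l ^ 2) / 2)) := by
  have hm : MeasurableSet {z : Fin n → Fin m → ℝ | ∃ v : Fin m → ℝ, l2norm v = 1 ∧
      c * (√m + √q + l) < l2norm ((P * Matrix.of z) *ᵥ v)} := by
    apply IsOpen.measurableSet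
    have : {z : Fin n → Fin m → ℝ | ∃ v : Fin m → ℝ, l2norm v = 1 ∧
      c * (√m + √q + l) < l2norm ((P * Matrix.of z) *ᵥ v)} =
      ⋃ v : Fin m → ℝ, ⋃ _ : l2norm v = 1, {z : Fin n → Fin m → ℝ |
        c * (√m + √q + l) < l2norm ((P * Matrix.of z) *ᵥ v)} := by
      ext z; simp
    rw [this]
    refine isOpen_iUnion fun v => isOpen_iUnion fun _ => isOpen_lt continuous_const ?_
    simp only [l2norm, mulVec, dotProduct, Matrix.mul_apply, Matrix.of_apply]
    fun_prop
  have h1 := (gm_map n m c).measure_preimage hm.nullMeasurableSet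
  have h2 := op_tail (I := Fin n) (J := Fin m) P hT hP hq hq0 hl
  refine (Eq.trans_le (b := gam (Fin n × Fin m) {x : Fin n × Fin m → ℝ | ∃ v : Fin m → ℝ,
    l2norm v = 1 ∧ c * (√m + √q + l) < l2norm ((P * Matrix.of fun i j => c * x (i, j)) *ᵥ v)})
    ?_ (measure_mono ?_)).trans h2
  · exact h1.symm
  · rintro x ⟨v, hv, hx⟩
    refine ⟨v, ?_, ?_⟩
    · exact (Real.sqrt_eq_one).1 hv
    · have : (Matrix.of fun i j => c * x (i, j)) = c • (Matrix.of fun i j => x (i, j)) := by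
        ext; simp
      rw [this, Matrix.mul_smul, smul_mulVec, l2norm] at hx
      simp only [Pi.smul_apply, smul_eq_mul, mul_pow, ← Finset.mul_sum] at hx
      rw [Real.sqrt_mul (sq_nonneg c), Real.sqrt_sq hc.le] at hx
      simpa using lt_of_mul_lt_mul_left hx hc.le

end transfer

section proj

lemma MP_X {n p : ℕ} {X : Matrix (Fin n) (Fin p) ℝ} {Mi : Matrix (Fin p) (Fin p) ℝ}
    (h : IsMoorePenrose (Xᵀ * X) Mi) : X * Mi * Xᵀ * X = X := by
  obtain ⟨h1, -, -, -⟩ := h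
  have : X * Mi * Xᵀ * X - X = 0 := by
    set E := X * Mi * Xᵀ * X - X with hE
    have hX : Xᵀ * E = 0 := by
      rw [hE, Matrix.mul_sub, sub_eq_zero]
      conv_rhs => rw [← h1]
      simp only [Matrix.mul_assoc]
    have hEE : Eᵀ * E = 0 := by
      have : E = X * (Mi * Xᵀ * X - 1) := by rw [hE, Matrix.mul_sub]; simp [Matrix.mul_assoc]
      have h5 : Eᵀ = (Mi * Xᵀ * X - 1)ᵀ * Xᵀ := by rw [this, Matrix.transpose_mul]
      rw [h5, Matrix.mul_assoc, hX, Matrix.mul_zero]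
    have := Matrix.conjTranspose_mul_self_eq_zero (A := E)
    rw [Matrix.conjTranspose_eq_transpose_of_trivial] at this
    exact this.1 hEE
  exact sub_eq_zero.1 this

lemma MP_symm {n p : ℕ} {X : Matrix (Fin n) (Fin p) ℝ} {Mi : Matrix (Fin p) (Fin p) ℝ}
    (h : IsMoorePenrose (Xᵀ * X) Mi) : (X * Mi * Xᵀ)ᵀ = X * Mi * Xᵀ := by
  have h1 := MP_X h
  set P := X * Mi * Xᵀ with hP
  have h2 : P * Pᵀ = Pᵀ := by
    have : Pᵀ = X * (Miᵀ * Xᵀ) := by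
      rw [hP]; simp [Matrix.transpose_mul]
    rw [this, ← Matrix.mul_assoc, h1]
  have h3 := congrArg Matrix.transpose h2
  rw [Matrix.transpose_mul, Matrix.transpose_transpose, h2] at h3
  exact h3

lemma MP_idem {n p : ℕ} {X : Matrix (Fin n) (Fin p) ℝ} {Mi : Matrix (Fin p) (Fin p) ℝ}
    (h : IsMoorePenrose (Xᵀ * X) Mi) : (X * Mi * Xᵀ) * (X * Mi * Xᵀ) = X * Mi * Xᵀ := by
  rw [← Matrix.mul_assoc, ← Matrix.mul_assoc, MP_X h]

lemma trace_le_rank {n : ℕ} (P : Matrix (Fin n) (Fin n) ℝ) (h : P * P = P) :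
    P.trace = P.rank := by
  have hi : IsIdempotentElem (Matrix.toLin' P) := by
    unfold IsIdempotentElem
    rw [Module.End.mul_eq_comp, ← Matrix.toLin'_mul, h]
  have := (LinearMap.IsIdempotentElem.isProj_range _ hi).trace
  rw [Matrix.trace_toLin'_eq] at this
  rw [this]
  rfl

lemma MP_trace {n p : ℕ} {X : Matrix (Fin n) (Fin p) ℝ} {Mi : Matrix (Fin p) (Fin p) ℝ}
    (h : IsMoorePenrose (Xᵀ * X) Mi) : (X * Mi * Xᵀ).trace ≤ (min n p : ℕ) := by
  rw [trace_le_rank _ (MP_idem h)]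
  norm_cast
  refine le_min ?_ ?_
  · simpa using Matrix.rank_le_width (X * Mi * Xᵀ)
  · rw [Matrix.mul_assoc]
    exact (Matrix.rank_mul_le_left _ _).trans (by simpa using Matrix.rank_le_width X)

end proj



section l2
variable {I J : Type*} [Fintype I] [Fintype J]

lemma l2_eq (v : I → ℝ) : l2norm v = ‖(WithLp.toLp 2 v : EuclideanSpace ℝ I)‖ := by
  rw [EuclideanSpace.norm_eq]; simp [l2norm]

lemma l2_nonneg (v : I → ℝ) : 0 ≤ l2norm v := Real.sqrt_nonneg _

lemma l2_sq (v : I → ℝ) : l2norm v ^ 2 = v ⬝ᵥ v := by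
  rw [l2norm, Real.sq_sqrt (by positivity), dotProduct]
  exact Finset.sum_congr rfl fun i _ => by ring

lemma l2_add (u v : I → ℝ) : l2norm (u + v) ≤ l2norm u + l2norm v := by
  simp only [l2_eq, WithLp.toLp_add]; exact norm_add_le _ _

lemma l2_neg (u : I → ℝ) : l2norm (-u) = l2norm u := by simp [l2norm]

lemma l2_smul (c : ℝ) (v : I → ℝ) : l2norm (c • v) = |c| * l2norm v := by
  simp only [l2_eq, WithLp.toLp_smul, norm_smul, Real.norm_eq_abs]

lemma l2_zero : l2norm (0 : I → ℝ) = 0 := by simp [l2norm]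

lemma l2_eq_zero {v : I → ℝ} (h : l2norm v = 0) : v = 0 := by
  rw [l2_eq, norm_eq_zero] at h
  simpa using h

lemma l2_dot (u v : I → ℝ) : u ⬝ᵥ v ≤ l2norm u * l2norm v := by
  rw [l2norm, l2norm, dotProduct]
  exact Real.sum_mul_le_sqrt_mul_sqrt _ _ _

lemma l2_unit {v : I → ℝ} (h : v ≠ 0) : l2norm ((l2norm v)⁻¹ • v) = 1 := by
  have : l2norm v ≠ 0 := fun h' => h (l2_eq_zero h')
  rw [l2_smul, abs_of_nonneg (inv_nonneg.2 (l2_nonneg v)), inv_mul_cancel₀ this]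

lemma l2_homog (M : Matrix I J ℝ) {B : ℝ} (h : ∀ v, l2norm v = 1 → l2norm (M *ᵥ v) ≤ B) (v : J → ℝ) :
    l2norm (M *ᵥ v) ≤ B * l2norm v := by
  by_cases hv : v = 0
  · subst hv; simp [l2_zero]
  · have h1 := h _ (l2_unit hv)
    have h0 : 0 < l2norm v := lt_of_le_of_ne (l2_nonneg v) fun h' => hv (l2_eq_zero h'.symm)
    rw [mulVec_smul, l2_smul, abs_of_pos (inv_pos.2 h0), inv_mul_le_iff₀ h0] at h1
    linarith

lemma l2_bdd (M : Matrix I J ℝ) : ∃ C, ∀ v, l2norm v = 1 → l2norm (M *ᵥ v) ≤ C := by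
  refine ⟨frobNorm M, fun v hv => ?_⟩
  unfold l2norm frobNorm
  apply Real.sqrt_le_sqrt
  refine Finset.sum_le_sum fun i _ => ?_
  have := Finset.sum_mul_sq_le_sq_mul_sq Finset.univ (M i) v
  rw [Real.sqrt_eq_one.1 hv, mul_one] at this
  exact this

lemma exists_unit {V : Submodule ℝ (J → ℝ)} {j : ℕ} (hj : 1 ≤ j) (hV : Module.finrank ℝ V = j) :
    ∃ v ∈ V, l2norm v = 1 := by
  have : V ≠ ⊥ := by rintro rfl; simp at hV; omega
  obtain ⟨v, hv, h0⟩ := Submodule.exists_mem_ne_zero_of_ne_bot this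
  exact ⟨_, V.smul_mem _ hv, l2_unit h0⟩

lemma inner_bdd (M : Matrix I J ℝ) (V : Submodule ℝ (J → ℝ)) :
    BddBelow { u | ∃ v ∈ V, l2norm v = 1 ∧ u = l2norm (M.mulVec v) } :=
  ⟨0, by rintro _ ⟨v, _, _, rfl⟩; exact l2_nonneg _⟩

lemma sv_nonneg (M : Matrix I J ℝ) (j : ℕ) : 0 ≤ singularValue M j := by
  apply Real.sSup_nonneg
  rintro _ ⟨V, _, rfl⟩
  apply Real.sInf_nonneg
  rintro _ ⟨v, _, _, rfl⟩; exact l2_nonneg _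

lemma sv_le (M : Matrix I J ℝ) {j : ℕ} {C : ℝ} (hC : 0 ≤ C)
    (h : ∀ V : Submodule ℝ (J → ℝ), Module.finrank ℝ V = j →
      ∃ v ∈ V, l2norm v = 1 ∧ l2norm (M *ᵥ v) ≤ C) : singularValue M j ≤ C := by
  apply Real.sSup_le _ hC
  rintro _ ⟨V, hV, rfl⟩
  obtain ⟨v, hv, h1, h2⟩ := h V hV
  exact (csInf_le (inner_bdd M V) ⟨v, hv, h1, rfl⟩).trans h2

lemma le_sv (M : Matrix I J ℝ) {j : ℕ} (hj : 1 ≤ j) {c : ℝ} (V : Submodule ℝ (J → ℝ))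
    (hV : Module.finrank ℝ V = j) (h : ∀ v ∈ V, l2norm v = 1 → c ≤ l2norm (M *ᵥ v)) :
    c ≤ singularValue M j := by
  obtain ⟨C, hC⟩ := l2_bdd M
  have hb : BddAbove { t | ∃ V : Submodule ℝ (J → ℝ), Module.finrank ℝ V = j ∧
    t = sInf { u | ∃ v ∈ V, l2norm v = 1 ∧ u = l2norm (M.mulVec v) } } := by
    refine ⟨C, ?_⟩
    rintro _ ⟨W, hW, rfl⟩
    obtain ⟨v, hv, h1⟩ := exists_unit hj hW
    exact (csInf_le (inner_bdd M W) ⟨v, hv, h1, rfl⟩).trans (hC v h1)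
  refine le_trans ?_ (le_csSup hb ⟨V, hV, rfl⟩)
  obtain ⟨v, hv, h1⟩ := exists_unit hj hV
  refine le_csInf ⟨_, v, hv, h1, rfl⟩ ?_
  rintro _ ⟨v, hv, h1, rfl⟩
  exact h v hv h1

lemma sv_exists (M : Matrix I J ℝ) {j : ℕ} {c : ℝ} (hc : 0 ≤ c) (h : c < singularValue M j) :
    ∃ V : Submodule ℝ (J → ℝ), Module.finrank ℝ V = j ∧
      ∀ v ∈ V, l2norm v = 1 → c < l2norm (M *ᵥ v) := by
  unfold singularValue at h
  obtain ⟨_, ⟨V, hV, rfl⟩, hlt⟩ := exists_lt_of_lt_csSup (by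
    by_contra hne
    rw [Set.not_nonempty_iff_eq_empty] at hne
    rw [hne, Real.sSup_empty] at h
    linarith) h
  refine ⟨V, hV, fun v hv h1 => hlt.trans_le (csInf_le (inner_bdd M V) ⟨v, hv, h1, rfl⟩)⟩

lemma sv_perturb (M N : Matrix I J ℝ) {j : ℕ} (hj : 1 ≤ j) {B : ℝ} (hB : 0 ≤ B)
    (h : ∀ v, l2norm v = 1 → l2norm (M *ᵥ v) ≤ l2norm (N *ᵥ v) + B) :
    singularValue M j ≤ singularValue N j + B := by
  by_contra! hlt
  obtain ⟨V, hV, h1⟩ := sv_exists M (add_nonneg (sv_nonneg N j) hB) hlt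
  obtain ⟨c, hc1, hc2⟩ := exists_between hlt
  obtain ⟨V, hV, h1⟩ := sv_exists M ((add_nonneg (sv_nonneg N j) hB).trans hc1.le) hc2
  have := le_sv N hj (c := c - B) V hV fun v hv h2 => by
    have := h v h2; have := h1 v hv h2; linarith
  linarith

lemma sv_anti (M : Matrix I J ℝ) {i j : ℕ} (hi : 1 ≤ i) (hij : i ≤ j) :
    singularValue M j ≤ singularValue M i := by
  by_contra! hlt
  obtain ⟨c, hc1, hc2⟩ := exists_between hlt
  obtain ⟨V, hV, h1⟩ := sv_exists M ((sv_nonneg M i).trans hc1.le) hc2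
  obtain ⟨f, hf⟩ := exists_linearIndependent_of_le_finrank (R := ℝ) (M := V) (hij.trans_eq hV.symm)
  have hf' : LinearIndependent ℝ (fun k => (f k : J → ℝ)) :=
    hf.map' V.subtype V.ker_subtype
  have := le_sv M hi (c := c) (Submodule.span ℝ (Set.range fun k => (f k : J → ℝ)))
    (by rw [finrank_span_eq_card hf']; simp) fun v hv h2 => by
    refine (h1 v ?_ h2).le
    refine (Submodule.span_le.2 ?_) hv
    rintro _ ⟨k, rfl⟩; exact (f k).2
  linarith

end l2

section det
variable {I J : Type*} [Fintype I] [Fintype J]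

lemma iso_l2 {r : ℕ} {V : Matrix J (Fin r) ℝ} (h : Vᵀ * V = 1) (w : Fin r → ℝ) :
    l2norm (V *ᵥ w) = l2norm w := by
  have : l2norm (V *ᵥ w) ^ 2 = l2norm w ^ 2 := by
    rw [l2_sq, l2_sq, dotProduct_mulVec, ← mulVec_transpose, mulVec_mulVec, h, one_mulVec]
  exact (pow_left_inj₀ (l2_nonneg _) (l2_nonneg _) two_ne_zero).1 this

/-- columns relation -/
lemma rsv_mul {r : ℕ} {N : Matrix I J ℝ} {V : Matrix J (Fin r) ℝ}
    (h : IsRightSingularVectors N V) (hpos : ∀ j : Fin r, 0 < singularValue N (j.1 + 1))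
    (w : Fin r → ℝ) :
    Nᵀ *ᵥ (N *ᵥ (V *ᵥ fun j => w j / singularValue N (j.1 + 1) ^ 2)) = V *ᵥ w := by
  have h1 : Nᵀ * N * V = V * Matrix.diagonal (fun j : Fin r => singularValue N (j.1 + 1) ^ 2) := by
    ext i j
    have := congrFun (h.2 j) i
    rw [Matrix.mul_diagonal]
    rw [Pi.smul_apply, smul_eq_mul] at this
    rw [mul_comm, ← this]
    rfl
  rw [mulVec_mulVec, mulVec_mulVec, h1, ← mulVec_mulVec]
  congr 1
  ext j
  rw [mulVec_diagonal]
  have := (hpos j).ne'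
  field_simp

lemma rsv_ker {r : ℕ} {N : Matrix I J ℝ} {V : Matrix J (Fin r) ℝ} (hr : N.rank ≤ r)
    (h : IsRightSingularVectors N V) (hpos : ∀ j : Fin r, 0 < singularValue N (j.1 + 1))
    {x : J → ℝ} (hx : Vᵀ *ᵥ x = 0) : N *ᵥ x = 0 := by
  have hle : LinearMap.ker N.mulVecLin ≤ LinearMap.ker (Vᵀ).mulVecLin := by
    intro y hy
    rw [LinearMap.mem_ker, mulVecLin_apply] at hy ⊢
    have : ∀ w, w ⬝ᵥ (Vᵀ *ᵥ y) = 0 := by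
      intro w
      rw [dotProduct_mulVec, vecMul_transpose, ← rsv_mul h hpos, mulVec_transpose, ← dotProduct_mulVec,
        hy, dotProduct_zero]
    exact dotProduct_self_eq_zero.1 (this _)
  have h1 := LinearMap.finrank_range_add_finrank_ker N.mulVecLin
  have h2 := LinearMap.finrank_range_add_finrank_ker (Vᵀ).mulVecLin
  have h3 : (Vᵀ).rank = r := by
    rw [rank_transpose, ← rank_transpose_mul_self, h.1, rank_one, Fintype.card_fin]
  have heq := Submodule.eq_of_le_of_finrank_le hle (by
    unfold Matrix.rank at hr h3; omega)
  have : x ∈ LinearMap.ker N.mulVecLin := by rw [heq]; exact hx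
  exact this

theorem det_main {r : ℕ} (hr1 : 1 ≤ r) {N E : Matrix I J ℝ} {V : Matrix J (Fin r) ℝ} (hr : N.rank ≤ r)
    (h : IsRightSingularVectors N V) {B t : ℝ} (hB0 : 0 ≤ B)
    (hB : ∀ v, l2norm v = 1 → l2norm (E *ᵥ v) ≤ B)
    (hpos : 0 < singularValue N r) (h4 : 4 * B ≤ singularValue N r) (hBt : B < t)
    (ht : t + B ≤ singularValue N r) :
    sSup {j : ℕ | t ≤ singularValue (N + E) j} = r ∧
      ∀ V0 : Matrix J (Fin r) ℝ, IsRightSingularVectors (N + E) V0 →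
        1 / 4 < singularValue (Vᵀ * V0) r := by
  have hY : singularValue N r ≤ singularValue (N + E) r + B := by
    refine sv_perturb _ _ hr1 hB0 fun v hv => ?_
    have h1 : N *ᵥ v = (N + E) *ᵥ v + -(E *ᵥ v) := by rw [add_mulVec]; abel
    rw [h1]
    refine (l2_add _ _).trans ?_
    rw [l2_neg]
    have := hB v hv
    linarith
  refine ⟨IsGreatest.csSup_eq ⟨?_, ?_⟩, ?_⟩
  · change t ≤ _
    linarith
  · intro j hj
    by_contra! hjr
    have : singularValue (N + E) j ≤ B := by
      refine sv_le _ hB0 fun W hW => ?_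
      have h1 := LinearMap.finrank_range_add_finrank_ker N.mulVecLin
      have h2 := Submodule.finrank_sup_add_finrank_inf_eq W (LinearMap.ker N.mulVecLin)
      have h8 := Submodule.finrank_le (W ⊔ LinearMap.ker N.mulVecLin)
      have h3 : 1 ≤ Module.finrank ℝ ↥(W ⊓ LinearMap.ker N.mulVecLin) := by
        unfold Matrix.rank at hr
        omega
      obtain ⟨v, hv, h5⟩ := exists_unit h3 rfl
      refine ⟨v, hv.1, h5, ?_⟩
      have h6 : N *ᵥ v = 0 := hv.2
      rw [add_mulVec, h6, zero_add]
      exact hB v h5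
    have h7 : t ≤ singularValue (N + E) j := hj
    linarith
  · intro V0 hV0
    set Y := N + E with hYd
    set s := singularValue Y r with hs
    have hs0 : 0 < s := by linarith
    have hsB : 3 * B ≤ s := by linarith
    have hNpos : ∀ j : Fin r, 0 < singularValue N (j.1 + 1) := fun j =>
      hpos.trans_le (sv_anti N (by omega) (by omega))
    have hYs : ∀ j : Fin r, s ≤ singularValue Y (j.1 + 1) := fun j => sv_anti Y (by omega) (by omega)
    refine lt_of_lt_of_le (by norm_num : (1 / 4 : ℝ) < 1 / 2) ?_
    refine le_sv _ hr1 ⊤ (by simp) fun w _ hw => ?_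
    rw [← mulVec_mulVec]
    set v := V0 *ᵥ w with hv
    have hv1 : l2norm v = 1 := by rw [hv, iso_l2 hV0.1, hw]
    set y := v - V *ᵥ (Vᵀ *ᵥ v) with hy
    have hVy : Vᵀ *ᵥ y = 0 := by
      rw [hy, mulVec_sub, mulVec_mulVec _ Vᵀ V, h.1, one_mulVec, sub_self]
    have hNy := rsv_ker hr h hNpos hVy
    have hYy : Y *ᵥ y = E *ᵥ y := by rw [hYd, add_mulVec, hNy, zero_add]
    have hyV : y ⬝ᵥ (V *ᵥ (Vᵀ *ᵥ v)) = 0 := by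
      rw [dotProduct_mulVec, ← mulVec_transpose, hVy, zero_dotProduct]
    have hyv : y ⬝ᵥ v = l2norm y ^ 2 := by
      rw [l2_sq]
      conv_rhs => rw [hy, dotProduct_sub, ← hy, hyV, sub_zero]
    have hpyth : 1 = l2norm y ^ 2 + l2norm (Vᵀ *ᵥ v) ^ 2 := by
      have h1 : v = y + V *ᵥ (Vᵀ *ᵥ v) := by rw [hy]; abel
      have h2 : l2norm v ^ 2 = l2norm y ^ 2 + l2norm (V *ᵥ (Vᵀ *ᵥ v)) ^ 2 := by
        rw [l2_sq, l2_sq, l2_sq]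
        conv_lhs => rw [h1, add_dotProduct, dotProduct_add, dotProduct_add, hyV,
          dotProduct_comm (V *ᵥ (Vᵀ *ᵥ v)) y, hyV]
        ring
      rw [iso_l2 h.1, hv1] at h2
      linarith
    set w' : Fin r → ℝ := fun j => w j / singularValue Y (j.1 + 1) ^ 2 with hw'
    have hvw : Yᵀ *ᵥ (Y *ᵥ (V0 *ᵥ w')) = v :=
      rsv_mul hV0 (fun j => hs0.trans_le (hYs j)) w
    have h1 : y ⬝ᵥ v = (Y *ᵥ y) ⬝ᵥ (Y *ᵥ (V0 *ᵥ w')) := by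
      rw [← hvw, dotProduct_mulVec y, vecMul_transpose]
    have h2 : l2norm (Y *ᵥ (V0 *ᵥ w')) ^ 2 ≤ (1 / s) ^ 2 := by
      rw [l2_sq, dotProduct_comm, dotProduct_mulVec, ← mulVec_transpose, hvw, hv, dotProduct_mulVec,
        ← mulVec_transpose, mulVec_mulVec, hV0.1, one_mulVec]
      have h3 : (1 / s) ^ 2 = ∑ j, (1 / s) ^ 2 * w j ^ 2 := by
        rw [← Finset.mul_sum, Real.sqrt_eq_one.1 hw, mul_one]
      rw [h3, dotProduct]
      refine Finset.sum_le_sum fun j _ => ?_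
      have h5 := hYs j
      have h6 : 1 / singularValue Y (j.1 + 1) ^ 2 ≤ 1 / s ^ 2 := by gcongr
      have h7 : w j * w' j = 1 / singularValue Y (j.1 + 1) ^ 2 * w j ^ 2 := by
        rw [hw']; ring
      rw [h7, div_pow, one_pow]
      gcongr
    have h3 : l2norm (Y *ᵥ (V0 *ᵥ w')) ≤ 1 / s :=
      (pow_le_pow_iff_left₀ (l2_nonneg _) (by positivity) two_ne_zero).1 h2
    have h5 : l2norm y ^ 2 ≤ B * l2norm y * (1 / s) := by
      rw [← hyv, h1]
      refine (l2_dot _ _).trans ?_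
      rw [hYy]
      have := l2_homog E hB y
      have := l2_nonneg y
      gcongr
      exact l2_nonneg _
    have h6 : l2norm y ≤ 1 / 3 := by
      by_contra! hlt
      have h7 : B * (1 / s) ≤ 1 / 3 := by
        rw [mul_one_div, div_le_iff₀ hs0]; linarith
      nlinarith
    have h8 := l2_nonneg y
    by_contra! hlt
    have h9 := l2_nonneg (Vᵀ *ᵥ v)
    nlinarith

end det

/-- Initialization I. For every value a = κ₋(s_*) > 0 there exist a sufficiently
small constant c₁ > 0 and a constant c₀ > 0 (depending only on c₁ and a) such that: for
Y₀ = XA + Z₀ with Z₀ i.i.d. N(0,(2σ)²) entries, A ∈ Θ(s,r,d,γ), q = n ∧ p,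
P = XM⁻X' (M = X'X, M⁻ its Moore–Penrose pseudoinverse),
η ≥ 2(1+√(2 log p/(m+q)))(√m+√q)/ξ with ξ ∈ (0,1], log p < (m+q)/2, 2σ(√m+√q) < c₁d,
σ_r(XA) ≥ (1+ξ)ση and κ₋(s_*)d ≤ σ_r(XA): with probability at least 1 − 1/p, the selected
rank r̂ = max{j : σ_j(PY₀) ≥ ση} equals r and every matrix V₀ of top-r right singular vectors
of PY₀ satisfies σ_r(V'V₀) > c₀. -/
theorem stmt10 :
    ∀ a : ℝ, 0 < a →
    ∃ c1 c0 : ℝ, 0 < c1 ∧ 0 < c0 ∧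
    ∀ (n m p s r sstar : ℕ) (d γ σ η ξ : ℝ)
      (X : Matrix (Fin n) (Fin p) ℝ) (A : Matrix (Fin p) (Fin m) ℝ)
      (V : Matrix (Fin m) (Fin r) ℝ) (Mi : Matrix (Fin p) (Fin p) ℝ),
      1 ≤ r → 1 ≤ γ →
      memTheta A s r d γ →
      0 < σ → ξ ∈ Set.Ioc (0 : ℝ) 1 →
      kappaMinus X sstar = a →
      IsMoorePenrose (Xᵀ * X) Mi →
      IsRightSingularVectors (X * A) V →
      2 * (1 + Real.sqrt (2 * Real.log p / ((m : ℝ) + (min n p : ℕ))))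
          * (Real.sqrt m + Real.sqrt (min n p : ℕ)) / ξ ≤ η →
      Real.log p < ((m : ℝ) + (min n p : ℕ)) / 2 →
      2 * σ * (Real.sqrt m + Real.sqrt (min n p : ℕ)) < c1 * d →
      (1 + ξ) * σ * η ≤ singularValue (X * A) r →
      kappaMinus X sstar * d ≤ singularValue (X * A) r →
      ENNReal.ofReal (1 - 1 / (p : ℝ)) ≤
        gaussianMatrix n m (Real.toNNReal ((2 * σ) ^ 2))
          {z | sSup {j : ℕ | σ * η ≤ singularValue (X * Mi * Xᵀ * (X * A + z)) j} = r ∧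
            ∀ V0 : Matrix (Fin m) (Fin r) ℝ,
              IsRightSingularVectors (X * Mi * Xᵀ * (X * A + z)) V0 →
                c0 < singularValue (Vᵀ * V0) r} := by
  intro a ha
  refine ⟨a / 8, 1 / 4, by positivity, by norm_num, ?_⟩
  intro n m p s r sstar d γ σ η ξ X A V Mi hr1 _ hA hσ hξ hκ hMP hV hη hlog hc1 hgap hκd
  obtain ⟨hrank, hd, -, -, -⟩ := hA
  rw [hκ] at hκd
  have hpos : 0 < singularValue (X * A) r := (mul_pos ha hd).trans_le hκd
  have hrXA : (X * A).rank ≤ r := (Matrix.rank_mul_le_right X A).trans hrank.le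
  have hm : 1 ≤ m := by
    have := Matrix.rank_le_width A
    omega
  have hn : 1 ≤ n := by
    by_contra! h0
    obtain rfl : n = 0 := by omega
    obtain ⟨W, hW, hlt⟩ := sv_exists (X * A) le_rfl hpos
    obtain ⟨v, hv, h1⟩ := exists_unit hr1 hW
    have := hlt v hv h1
    simp [l2norm] at this
  rcases Nat.lt_or_ge p 2 with hp | hp
  · have : (1 : ℝ) - 1 / (p : ℝ) ≤ 0 := by
      interval_cases p
      · have := Matrix.rank_le_height A
        omega
      · norm_num
    rw [ENNReal.ofReal_of_nonpos this]
    exact bot_le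
  set q : ℕ := min n p with hq
  have hq1 : 1 ≤ q := le_min hn (by omega)
  have hp0 : (0 : ℝ) < p := by exact_mod_cast (by omega : 0 < p)
  have hlp : 0 < Real.log p := Real.log_pos (by exact_mod_cast hp)
  have hm0 : (0 : ℝ) < m := by exact_mod_cast hm
  have hq0 : (0 : ℝ) < q := by exact_mod_cast hq1
  set S : ℝ := √(m : ℝ) + √(q : ℝ) with hS
  have hsm : 0 < √(m : ℝ) := Real.sqrt_pos.2 hm0
  have hsq : 0 < √(q : ℝ) := Real.sqrt_pos.2 hq0
  have hS0 : 0 < S := by positivity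
  set τ : ℝ := √(2 * Real.log p / ((m : ℝ) + q)) with hτ
  set l : ℝ := √(2 * Real.log p) with hl
  have hl2 : l ^ 2 = 2 * Real.log p := Real.sq_sqrt (by positivity)
  have hτ0 : 0 < τ := Real.sqrt_pos.2 (by positivity)
  have hτ1 : τ ≤ 1 := by
    rw [hτ]
    refine Real.sqrt_le_iff.2 ⟨zero_le_one, ?_⟩
    rw [one_pow, div_le_one (by positivity)]
    linarith
  have hmq : √((m : ℝ) + q) < S := by
    rw [Real.sqrt_lt' hS0, hS]
    nlinarith [Real.sq_sqrt hm0.le, Real.sq_sqrt hq0.le, mul_pos hsm hsq]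
  have hlτ : l < τ * S := by
    have : l = τ * √((m : ℝ) + q) := by
      rw [hτ, ← Real.sqrt_mul (by positivity), hl]
      congr 1
      field_simp
    rw [this]
    exact mul_lt_mul_of_pos_left hmq hτ0
  set B : ℝ := 2 * σ * (S + l) with hB
  have hl0 : 0 ≤ l := Real.sqrt_nonneg _
  have hB0 : 0 ≤ B := by positivity
  have hBlt : B < 2 * σ * ((1 + τ) * S) := by
    rw [hB]
    refine mul_lt_mul_of_pos_left ?_ (by positivity)
    linarith
  have hξη : 2 * (1 + τ) * S ≤ η * ξ := by
    rwa [div_le_iff₀ hξ.1] at hη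
  have hBt' : B < ξ * (σ * η) := by
    have := mul_le_mul_of_nonneg_left hξη hσ.le
    nlinarith
  have hη0 : 0 < σ * η := by
    by_contra! h
    have := mul_nonpos_of_nonneg_of_nonpos hξ.1.le h
    linarith
  have hBt : B < σ * η := by
    have := mul_le_mul_of_nonneg_right hξ.2 hη0.le
    linarith
  have hBd : 4 * B ≤ singularValue (X * A) r := by
    have h1 : (1 + τ) * S ≤ 2 * S := by gcongr; linarith
    have h2 := mul_le_mul_of_nonneg_left h1 (by positivity : 0 ≤ 2 * σ)
    nlinarith
  set P := X * Mi * Xᵀ with hP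
  have hPX : P * X = X := MP_X hMP
  have htail := gm_tail n m (c := 2 * σ) (by positivity) P (MP_symm hMP) (MP_idem hMP)
    (q := q) (MP_trace hMP) hq0.le hl0
  have hexp : Real.exp (-(l ^ 2) / 2) = 1 / p := by
    rw [hl2, show -(2 * Real.log p) / 2 = -Real.log p by ring, Real.exp_neg, Real.exp_log hp0,
      one_div]
  rw [hexp] at htail
  have : IsProbabilityMeasure (gaussianMatrix n m (Real.toNNReal ((2 * σ) ^ 2))) := by
    have h0 : IsProbabilityMeasure (Measure.pi fun _ : Fin n => Measure.pi fun _ : Fin m =>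
      gaussianReal 0 (Real.toNNReal ((2 * σ) ^ 2))) := inferInstance
    exact h0
  set μ := gaussianMatrix n m (Real.toNNReal ((2 * σ) ^ 2)) with hμ
  set Ev : Set (Matrix (Fin n) (Fin m) ℝ) :=
    {z | sSup {j : ℕ | σ * η ≤ singularValue (P * (X * A + z)) j} = r ∧
            ∀ V0 : Matrix (Fin m) (Fin r) ℝ,
              IsRightSingularVectors (P * (X * A + z)) V0 →
                1 / 4 < singularValue (Vᵀ * V0) r} with hEv
  set Bad : Set (Matrix (Fin n) (Fin m) ℝ) :=
    {z | ∃ v : Fin m → ℝ, l2norm v = 1 ∧ 2 * σ * (√(m : ℝ) + √(q : ℝ) + l) < l2norm ((P * z) *ᵥ v)}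
    with hBad
  have hcov : (univ : Set (Matrix (Fin n) (Fin m) ℝ)) ⊆ Ev ∪ Bad := by
    intro z _
    by_cases hz : z ∈ Bad
    · exact Or.inr hz
    · left
      have hz' : ∀ v, l2norm v = 1 → l2norm ((P * z) *ᵥ v) ≤ B := by
        intro v hv
        by_contra! hlt
        exact hz ⟨v, hv, hlt⟩
      have := det_main hr1 (N := X * A) (E := P * z) hrXA hV hB0 hz' hpos hBd hBt
        (by nlinarith)
      have hPz : P * (X * A + z) = X * A + P * z := by
        rw [Matrix.mul_add, ← Matrix.mul_assoc, hPX]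
      rw [hEv, mem_ofPred_eq, hPz]
      exact this
  have h1 : (1 : ℝ≥0∞) ≤ μ Ev + ENNReal.ofReal (1 / p) := by
    calc (1 : ℝ≥0∞) = μ univ := measure_univ.symm
      _ ≤ μ (Ev ∪ Bad) := measure_mono hcov
      _ ≤ μ Ev + μ Bad := measure_union_le _ _
      _ ≤ _ := by gcongr
  rw [ENNReal.ofReal_sub _ (by positivity), ENNReal.ofReal_one]
  exact tsub_le_iff_right.2 h1

end
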